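/- arXiv:math/0407344 — 3 statements merged into one kernel-verified Lean document; each statement's English description precedes it below -/
import Mathlib

section
/- Let ν be a σ-finite Borel measure on the solenoid S_N that is quasi-invariant for the shift S, let θ : S_N → 𝕋 be measurable, and let Δ = d(ν∘S)/dν. Then: (1) the operators Uξ = √Δ·θ·(ξ∘S) and (Tξ)((z_n)_n) = z₀·ξ((z_n)_n) on L²(ν) are unitary and satisfy UTU⁻¹ = Tᴺ, so they define a unitary representation π_{ν,θ} of BS(1,N); (2) for f ∈ L^∞(ν) and n ∈ ℤ, UⁿM_fU⁻ⁿ = M_{f∘Sⁿ}, for n, k ∈ ℤ the operator U⁻ⁿT^kUⁿ is multiplication by the character χ_{k/Nⁿ}, and the von Neumann algebra generated by {UⁿT^kU⁻ⁿ : n, k ∈ ℤ} is {M_f : f ∈ L^∞(ν)}; (3) the commutant of π_{ν,θ} is {M_f : f ∈ L^∞(ν), f∘S = f ν-a.e.}, so π_{ν,θ} is irreducible if and only if S is ergodic with respect to ν. -/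
noncomputable section

open MeasureTheory Real Complex Filter Finset
open scoped ENNReal

/-! ### Basic instances for the circle -/

instance : MeasurableSpace Circle := borel Circle
instance : BorelSpace Circle := ⟨rfl⟩

/-- The point `e^{-2πit}` of the unit circle. -/
def ee (t : ℝ) : Circle := Circle.exp (-(2 * π * t))

/-- Normalized Lebesgue measure on the circle, realized as the image of Lebesgue
measure on `[0,1)` under `t ↦ e^{-2πit}`. -/
def circleMeasure : Measure Circle := (volume.restrict (Set.Ico (0:ℝ) 1)).map ee

/-! ### The Baumslag–Solitar group `BS(1,N)` -/

/-- The single relation `u t u⁻¹ (t^N)⁻¹` defining `BS(1,N)`. -/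
def BSRel (N : ℕ) : Set (FreeGroup Bool) :=
  {FreeGroup.of true * FreeGroup.of false * (FreeGroup.of true)⁻¹ * ((FreeGroup.of false) ^ N)⁻¹}

/-- The Baumslag–Solitar group `BS(1,N) = ⟨u,t | u t u⁻¹ = t^N⟩`. -/
abbrev BS (N : ℕ) := PresentedGroup (BSRel N)

/-- The generator `u` of `BS(1,N)`. -/
def BS.u (N : ℕ) : BS N := PresentedGroup.of true

/-- The generator `t` of `BS(1,N)`. -/
def BS.t (N : ℕ) : BS N := PresentedGroup.of false

/-! ### The solenoid -/

/-- The `N`-solenoid, as a subgroup of the product of circles indexed by `ℤ`: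
all sequences `(z_n)` with `z_{n+1}^N = z_n`. -/
def solenoidGroup (N : ℕ) : Subgroup (ℤ → Circle) where
  carrier := {z | ∀ n : ℤ, z (n + 1) ^ N = z n}
  one_mem' := by intro n; simp
  mul_mem' := by
    intro a b ha hb n
    simp only [Set.mem_setOf_eq, Pi.mul_apply, mul_pow] at *
    rw [ha n, hb n]
  inv_mem' := by
    intro a ha n
    simp only [Set.mem_setOf_eq, Pi.inv_apply, inv_pow] at *
    rw [ha n]

/-- The `N`-solenoid as a type. -/
abbrev Solenoid (N : ℕ) := ↥(solenoidGroup N)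

/-- The shift `S` on the solenoid: `(S z)_n = z_{n-1}`. -/
def shift (N : ℕ) (z : Solenoid N) : Solenoid N :=
  ⟨fun n => z.val (n - 1), by
    intro n
    have h := z.property (n - 1)
    simpa using h⟩

/-- The inverse `S⁻¹` of the shift on the solenoid: `(S⁻¹ z)_n = z_{n+1}`. -/
def shiftInv (N : ℕ) (z : Solenoid N) : Solenoid N :=
  ⟨fun n => z.val (n + 1), fun n => z.property (n + 1)⟩

/-- Integer powers `Sⁿ` of the shift. -/
def shiftZ (N : ℕ) (n : ℤ) : Solenoid N → Solenoid N :=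
  if 0 ≤ n then (shift N)^[n.toNat] else (shiftInv N)^[(-n).toNat]

/-- The measure `ν ∘ S`, defined by `(ν ∘ S)(E) = ν(S(E))`. -/
def measShift (N : ℕ) (ν : Measure (Solenoid N)) : Measure (Solenoid N) :=
  ν.map (shiftInv N)

/-- `ν` is quasi-invariant for the shift `S`: `ν ∘ S` and `ν` are mutually
absolutely continuous. -/
def QuasiInvariant (N : ℕ) (ν : Measure (Solenoid N)) : Prop :=
  measShift N ν ≪ ν ∧ ν ≪ measShift N ν

/-- The shift `S` is ergodic with respect to `ν`. -/
def ShiftErgodic (N : ℕ) (ν : Measure (Solenoid N)) : Prop :=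
  ∀ E : Set (Solenoid N), MeasurableSet E → shift N ⁻¹' E = E → ν E = 0 ∨ ν Eᶜ = 0

/-- A bounded measurable (`L^∞`-type) function. -/
def BddMeasurable {α : Type*} [MeasurableSpace α] (f : α → ℂ) : Prop :=
  Measurable f ∧ ∃ C : ℝ, ∀ x, ‖f x‖ ≤ C

/-! ### The representation `π_{ν,θ}` -/

/-- The pair of unitaries `U, T` on `L²(ν)` given by
`Uξ = √Δ ⬝ θ ⬝ (ξ∘S)` (with `Δ = d(ν∘S)/dν`) and `(Tξ)(z) = z₀ ξ(z)`. -/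
def IsPiNuTheta (N : ℕ) (ν : Measure (Solenoid N)) (θ : Solenoid N → Circle)
    (U T : unitary (Lp ℂ 2 ν →L[ℂ] Lp ℂ 2 ν)) : Prop :=
  (∀ ξ : Lp ℂ 2 ν,
      (((U : Lp ℂ 2 ν →L[ℂ] Lp ℂ 2 ν) ξ : Lp ℂ 2 ν) : Solenoid N → ℂ) =ᵐ[ν]
        fun z => (Real.sqrt (((measShift N ν).rnDeriv ν z).toReal) : ℂ) * (θ z : ℂ) *
          (ξ : Solenoid N → ℂ) (shift N z)) ∧
  (∀ ξ : Lp ℂ 2 ν,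
      (((T : Lp ℂ 2 ν →L[ℂ] Lp ℂ 2 ν) ξ : Lp ℂ 2 ν) : Solenoid N → ℂ) =ᵐ[ν]
        fun z => ((z.val 0 : Circle) : ℂ) * (ξ : Solenoid N → ℂ) z)

/-- `φ` is a cyclic vector for the (unitary) representation generated by `U` and `T`:
the only closed subspace containing `φ` and invariant under the group generated by
`U` and `T` is the whole space. -/
def cyclicVector {H : Type*} [NormedAddCommGroup H] [InnerProductSpace ℂ H]
    [CompleteSpace H] (U T : unitary (H →L[ℂ] H)) (φ : H) : Prop :=
  ∀ K : Submodule ℂ H, IsClosed (K : Set H) → φ ∈ K →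
    (∀ g ∈ Subgroup.closure ({U, T} : Set (unitary (H →L[ℂ] H))),
      ∀ v ∈ K, (g : H →L[ℂ] H) v ∈ K) → K = ⊤

/-! ### Filters and the Ruelle operator -/

/-- The quadrature mirror filter condition `R_{m₀} 1 = 1`, written out on `[0,1)`:
`(1/N) ∑_{k<N} |m₀(e^{-2πi(x+k)/N})|² = 1` for a.e. `x`. -/
def QMF (N : ℕ) (m₀ : Circle → ℂ) : Prop :=
  ∀ᵐ x ∂(volume.restrict (Set.Ico (0:ℝ) 1)),
    (1 / N : ℝ) * ∑ k ∈ Finset.range N, ‖m₀ (ee ((x + k) / N))‖ ^ 2 = 1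

/-- `h` is a fixed point of the Ruelle operator `R_{m₀}`:
`(1/N) ∑_{w^N = z} |m₀(w)|² h(w) = h(z)` for a.e. `z`, written out on `[0,1)`. -/
def RuelleFixed (N : ℕ) (m₀ : Circle → ℂ) (h : Circle → ℂ) : Prop :=
  ∀ᵐ x ∂(volume.restrict (Set.Ico (0:ℝ) 1)),
    (1 / N : ℂ) * ∑ k ∈ Finset.range N,
        (‖m₀ (ee ((x + k) / N))‖ ^ 2 : ℝ) * h (ee ((x + k) / N)) = h (ee x)

/-- The wavelet representation of `BS(1,N)` associated to a filter `m₀`, realized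
on `L²(m)` for a measure `m` on the solenoid: `Uξ = m₀ ⬝ (ξ∘S)` and `T` is
multiplication by the coordinate `z₀`. -/
def IsWaveletRepOn (N : ℕ) (m₀ : Circle → ℂ) (m : Measure (Solenoid N))
    (U T : unitary (Lp ℂ 2 m →L[ℂ] Lp ℂ 2 m)) : Prop :=
  (∀ ξ : Lp ℂ 2 m,
      (((U : Lp ℂ 2 m →L[ℂ] Lp ℂ 2 m) ξ : Lp ℂ 2 m) : Solenoid N → ℂ) =ᵐ[m]
        fun z => m₀ (z.val 0) * (ξ : Solenoid N → ℂ) (shift N z)) ∧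
  (∀ ξ : Lp ℂ 2 m,
      (((T : Lp ℂ 2 m →L[ℂ] Lp ℂ 2 m) ξ : Lp ℂ 2 m) : Solenoid N → ℂ) =ᵐ[m]
        fun z => ((z.val 0 : Circle) : ℂ) * (ξ : Solenoid N → ℂ) z)

/-- The measure `m` on the solenoid associated to a weight `W` (with `N W = |m₀|²`):
its `z₀`-marginal is normalized Lebesgue measure on the circle, and
`d(m∘S)/dm = N W`. -/
def IsAssociatedMeasure (N : ℕ) (W : Circle → ℝ) (m : Measure (Solenoid N)) : Prop :=
  IsProbabilityMeasure m ∧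
  m.map (fun z : Solenoid N => z.val 0) = circleMeasure ∧
  measShift N m = m.withDensity (fun z => ENNReal.ofReal (N * W (z.val 0)))

end

section Helpers

open MeasureTheory Filter Topology
open scoped ENNReal

namespace SolHelp

variable {α : Type*} [MeasurableSpace α] {ν : Measure α}

theorem memLp_mul {f : α → ℂ} (hf : BddMeasurable f) (ξ : Lp ℂ 2 ν) :
    MemLp (fun z => f z * (ξ : α → ℂ) z) 2 ν := by
  obtain ⟨hm, C, hC⟩ := hf
  refine MemLp.of_le_mul (c := C) (Lp.memLp ξ) (hm.aestronglyMeasurable.mul (Lp.aestronglyMeasurable ξ)) ?_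
  filter_upwards with z
  rw [norm_mul]
  exact mul_le_mul_of_nonneg_right (hC z) (norm_nonneg _)

open Classical in
/-- Multiplication operator. -/
noncomputable def M (ν : Measure α) (f : α → ℂ) : Lp ℂ 2 ν →L[ℂ] Lp ℂ 2 ν :=
  if hf : BddMeasurable f then
    LinearMap.mkContinuousOfExistsBound
      { toFun := fun ξ => (memLp_mul hf ξ).toLp _
        map_add' := by
          intro ξ η
          apply Lp.ext
          filter_upwards [(memLp_mul hf (ξ + η)).coeFn_toLp, (memLp_mul hf ξ).coeFn_toLp,
            (memLp_mul hf η).coeFn_toLp, Lp.coeFn_add ξ η,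
            Lp.coeFn_add ((memLp_mul hf ξ).toLp _) ((memLp_mul hf η).toLp _)] with z h1 h2 h3 h4 h5
          rw [h1, h5, Pi.add_apply, h2, h3, h4, Pi.add_apply, mul_add]
        map_smul' := by
          intro c ξ
          apply Lp.ext
          filter_upwards [(memLp_mul hf (c • ξ)).coeFn_toLp, (memLp_mul hf ξ).coeFn_toLp,
            Lp.coeFn_smul c ξ,
            Lp.coeFn_smul c ((memLp_mul hf ξ).toLp _)] with z h1 h2 h4 h5
          rw [h1, RingHom.id_apply, h5, Pi.smul_apply, h2, h4, Pi.smul_apply, smul_eq_mul,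
            smul_eq_mul, mul_left_comm] }
      (by
        obtain ⟨C, hC⟩ := hf.2
        refine ⟨C, fun ξ => ?_⟩
        apply Lp.norm_le_mul_norm_of_ae_le_mul
        filter_upwards [(memLp_mul hf ξ).coeFn_toLp] with z h
        simp only [LinearMap.coe_mk, AddHom.coe_mk]
        rw [h, norm_mul]
        exact mul_le_mul_of_nonneg_right (hC z) (norm_nonneg _))
  else 0

theorem M_ae {f : α → ℂ} (hf : BddMeasurable f) (ξ : Lp ℂ 2 ν) :
    (M ν f ξ : α → ℂ) =ᵐ[ν] fun z => f z * (ξ : α → ℂ) z := by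
  unfold M
  rw [dif_pos hf]
  exact (memLp_mul hf ξ).coeFn_toLp

theorem eq_M {f : α → ℂ} (hf : BddMeasurable f) {A : Lp ℂ 2 ν →L[ℂ] Lp ℂ 2 ν}
    (h : ∀ ξ : Lp ℂ 2 ν, (A ξ : α → ℂ) =ᵐ[ν] fun z => f z * (ξ : α → ℂ) z) : A = M ν f := by
  ext1 ξ
  exact Lp.ext ((h ξ).trans (M_ae hf ξ).symm)

theorem bdd_const (c : ℂ) : BddMeasurable (fun _ : α => c) :=
  ⟨measurable_const, ‖c‖, fun _ => le_rfl⟩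

theorem BM.mul {f g : α → ℂ} (hf : BddMeasurable f) (hg : BddMeasurable g) :
    BddMeasurable (fun z => f z * g z) := by
  obtain ⟨hm, C, hC⟩ := hf
  obtain ⟨hm', C', hC'⟩ := hg
  refine ⟨hm.mul hm', C * C', fun x => ?_⟩
  rw [norm_mul]
  exact mul_le_mul (hC x) (hC' x) (norm_nonneg _) ((norm_nonneg _).trans (hC x))

theorem BM.add {f g : α → ℂ} (hf : BddMeasurable f) (hg : BddMeasurable g) :
    BddMeasurable (fun z => f z + g z) := by
  obtain ⟨hm, C, hC⟩ := hf
  obtain ⟨hm', C', hC'⟩ := hg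
  exact ⟨hm.add hm', C + C', fun x => norm_add_le_of_le (hC x) (hC' x)⟩

theorem BM.ind {E : Set α} (hE : MeasurableSet E) (c : ℂ) :
    BddMeasurable (E.indicator (fun _ => c)) :=
  ⟨measurable_const.indicator hE, ‖c‖, fun x => by
    by_cases h : x ∈ E <;> simp [h]⟩

theorem M_mul {f g : α → ℂ} (hf : BddMeasurable f) (hg : BddMeasurable g) :
    M ν f * M ν g = M ν (fun z => f z * g z) := by
  apply eq_M (BM.mul hf hg)
  intro ξ
  filter_upwards [M_ae hf (M ν g ξ), M_ae hg ξ] with z h1 h2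
  rw [mul_apply_eq_comp, h1, h2, mul_assoc]

theorem M_add {f g : α → ℂ} (hf : BddMeasurable f) (hg : BddMeasurable g) :
    M ν f + M ν g = M ν (fun z => f z + g z) := by
  apply eq_M (BM.add hf hg)
  intro ξ
  filter_upwards [M_ae hf ξ, M_ae hg ξ, Lp.coeFn_add (M ν f ξ) (M ν g ξ)] with z h1 h2 h3
  rw [add_apply, h3, Pi.add_apply, h1, h2, add_mul]

theorem M_const (c : ℂ) : M ν (fun _ => c) = c • (1 : Lp ℂ 2 ν →L[ℂ] Lp ℂ 2 ν) := by
  symm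
  apply eq_M (bdd_const c)
  intro ξ
  filter_upwards [Lp.coeFn_smul c ξ] with z h
  rw [smul_apply, one_apply_eq_self, h, Pi.smul_apply, smul_eq_mul]

theorem M_one : M ν (fun _ => (1:ℂ)) = 1 := by rw [M_const, one_smul]

theorem M_comm {f g : α → ℂ} (hf : BddMeasurable f) (hg : BddMeasurable g) :
    Commute (M ν f) (M ν g) := by
  unfold Commute SemiconjBy
  rw [M_mul hf hg, M_mul hg hf]
  simp only [mul_comm]

theorem M_tendsto {f : ℕ → α → ℂ} {g : α → ℂ} {C : ℝ} (hf : ∀ n, Measurable (f n))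
    (hC : ∀ n x, ‖f n x‖ ≤ C) (hlim : ∀ x, Tendsto (fun n => f n x) atTop (𝓝 (g x)))
    (ξ : Lp ℂ 2 ν) : BddMeasurable g ∧ Tendsto (fun n => M ν (f n) ξ) atTop (𝓝 (M ν g ξ)) := by
  have hg : BddMeasurable g :=
    ⟨measurable_of_tendsto_metrizable hf (tendsto_pi_nhds.2 hlim), C,
      fun x => le_of_tendsto (hlim x).norm (Eventually.of_forall fun n => hC n x)⟩
  refine ⟨hg, ?_⟩
  have hgC : ∀ x, ‖g x‖ ≤ C :=
      fun x => le_of_tendsto (hlim x).norm (Eventually.of_forall fun n => hC n x)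
  rw [Lp.tendsto_Lp_iff_tendsto_eLpNorm']
  have hfb : ∀ n, BddMeasurable (f n) := fun n => ⟨hf n, C, hC n⟩
  have key : ∀ n, eLpNorm (⇑(M ν (f n) ξ) - ⇑(M ν g ξ)) 2 ν
      = (∫⁻ z, (‖(f n z - g z) * (ξ : α → ℂ) z‖ₑ) ^ (2:ℝ) ∂ν) ^ (1/2 : ℝ) := by
    intro n
    rw [eLpNorm_eq_lintegral_rpow_enorm_toReal (by norm_num) (by norm_num)]
    simp only [ENNReal.toReal_ofNat]
    congr 1
    apply lintegral_congr_ae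
    filter_upwards [M_ae (hfb n) ξ, M_ae hg ξ] with z h1 h2
    rw [Pi.sub_apply, h1, h2, sub_mul]
  simp only [key]
  have h0 : (0:ℝ≥0∞) = (∫⁻ z, 0 ∂ν) ^ (1/2:ℝ) := by simp
  rw [h0]
  apply Tendsto.ennrpow_const
  refine tendsto_lintegral_of_dominated_convergence'
    (fun z => (‖(2 * C : ℂ) * (ξ : α → ℂ) z‖ₑ) ^ (2:ℝ)) ?_ ?_ ?_ ?_
  · intro n
    exact ((((hf n).sub hg.1).aemeasurable.mul
      (Lp.aestronglyMeasurable ξ).aemeasurable).enorm).pow_const _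
  · intro n
    filter_upwards with z
    apply ENNReal.rpow_le_rpow _ (by norm_num)
    rw [← ofReal_norm, ← ofReal_norm]
    apply ENNReal.ofReal_le_ofReal
    rw [norm_mul, norm_mul]
    refine mul_le_mul_of_nonneg_right ?_ (norm_nonneg _)
    have hC0 : 0 ≤ C := (norm_nonneg _).trans (hC n z)
    have : ‖(2 * C : ℂ)‖ = C + C := by
      rw [norm_mul, Complex.norm_real, Real.norm_of_nonneg hC0]; norm_num; ring
    rw [this]
    exact norm_sub_le_of_le (hC n z) (hgC z)
  · have := (memLp_mul (bdd_const (2 * C : ℂ)) ξ).2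
    rw [eLpNorm_lt_top_iff_lintegral_rpow_enorm_lt_top (by norm_num) (by norm_num)] at this
    simpa using this.ne
  · filter_upwards with z
    have : Tendsto (fun n => (f n z - g z) * (ξ : α → ℂ) z) atTop (𝓝 ((g z - g z) * (ξ : α → ℂ) z)) :=
      ((hlim z).sub_const _).mul_const _
    have h2 := (this.enorm).ennrpow_const (2:ℝ)
    simpa using h2

/-- The functions whose multiplication operator commutes with `A`. -/
def Com (A : Lp ℂ 2 ν →L[ℂ] Lp ℂ 2 ν) (f : α → ℂ) : Prop :=
  BddMeasurable f ∧ Commute A (M ν f)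

variable {A : Lp ℂ 2 ν →L[ℂ] Lp ℂ 2 ν}

theorem Com.mul {f g : α → ℂ} (hf : Com A f) (hg : Com A g) : Com A (fun z => f z * g z) :=
  ⟨BM.mul hf.1 hg.1, by rw [← M_mul hf.1 hg.1]; exact hf.2.mul_right hg.2⟩

theorem Com.add {f g : α → ℂ} (hf : Com A f) (hg : Com A g) : Com A (fun z => f z + g z) :=
  ⟨BM.add hf.1 hg.1, by rw [← M_add hf.1 hg.1]; exact hf.2.add_right hg.2⟩

theorem Com.const (c : ℂ) : Com A (fun _ => c) :=
  ⟨bdd_const c, by rw [M_const]; exact (Commute.one_right A).smul_right c⟩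

theorem Com.pow {f : α → ℂ} (hf : Com A f) (n : ℕ) : Com A (fun z => f z ^ n) := by
  induction n with
  | zero => simpa using Com.const (A := A) 1
  | succ n ih => simpa only [pow_succ] using ih.mul hf

theorem Com.lim {f : ℕ → α → ℂ} {g : α → ℂ} {C : ℝ} (hf : ∀ n, Com A (f n))
    (hC : ∀ n x, ‖f n x‖ ≤ C) (hlim : ∀ x, Tendsto (fun n => f n x) atTop (𝓝 (g x))) :
    Com A g := by
  refine ⟨(M_tendsto (ν := ν) (fun n => (hf n).1.1) hC hlim 0).1, ?_⟩
  unfold Commute SemiconjBy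
  ext1 ξ
  have h1 := (M_tendsto (fun n => (hf n).1.1) hC hlim ξ).2
  have h2 := (M_tendsto (fun n => (hf n).1.1) hC hlim (A ξ)).2
  have h3 := (A.continuous.tendsto _).comp h1
  refine tendsto_nhds_unique h3 (h2.congr fun n => ?_)
  exact (DFunLike.congr_fun (hf n).2 ξ).symm

open Classical in
/-- The sigma-algebra of sets whose indicators commute with `A`. -/
def comSigma (A : Lp ℂ 2 ν →L[ℂ] Lp ℂ 2 ν) : MeasurableSpace α where
  MeasurableSet' E := Com A (E.indicator (fun _ => (1:ℂ)))
  measurableSet_empty := by simpa using Com.const (A := A) 0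
  measurableSet_compl := by
    intro E hE
    convert (Com.const (A := A) 1).add ((Com.const (A := A) (-1)).mul hE) using 2 with z
    by_cases h : z ∈ E <;> simp [h]
  measurableSet_iUnion := by
    intro E hE
    have hc : ∀ n, Com A (fun z => ∏ i ∈ Finset.range n, (1 + (-1) * (E i).indicator (fun _ => (1:ℂ)) z)) := by
      intro n
      induction n with
      | zero => simpa using Com.const (A := A) 1
      | succ n ih =>
        simp only [Finset.prod_range_succ]
        exact ih.mul ((Com.const (A := A) 1).add ((Com.const (A := A) (-1)).mul (hE n)))
    have hval : ∀ i z, (1 + (-1) * (E i).indicator (fun _ => (1:ℂ)) z) = if z ∈ E i then 0 else 1 := by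
      intro i z; by_cases h : z ∈ E i <;> simp [h]
    have hl : Com A (fun z => if z ∈ ⋃ i, E i then (0:ℂ) else 1) := by
      refine Com.lim (C := 1) hc ?_ ?_
      · intro n x
        rw [norm_prod]
        refine Finset.prod_le_one (fun _ _ => norm_nonneg _) fun i _ => ?_
        rw [hval]; split_ifs <;> simp
      · intro x
        simp only [hval]
        by_cases h : x ∈ ⋃ i, E i
        · rw [if_pos h]
          obtain ⟨i, hi⟩ := Set.mem_iUnion.1 h
          refine tendsto_const_nhds.congr' ?_
          filter_upwards [eventually_gt_atTop i] with n hn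
          symm
          exact Finset.prod_eq_zero (Finset.mem_range.2 hn) (by simp [hi])
        · rw [if_neg h]
          refine tendsto_const_nhds.congr fun n => ?_
          symm
          refine Finset.prod_eq_one fun i _ => ?_
          rw [if_neg (fun hi => h (Set.mem_iUnion.2 ⟨i, hi⟩))]
    convert (Com.const (A := A) 1).add ((Com.const (A := A) (-1)).mul hl) using 2 with z
    by_cases h : z ∈ ⋃ i, E i
    · rw [Set.indicator_of_mem h, if_pos h]; simp
    · rw [Set.indicator_of_notMem h, if_neg h]; simp

theorem Com.simple (h : ∀ E : Set α, MeasurableSet E → Com A (E.indicator (fun _ => (1:ℂ))))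
    (f : SimpleFunc α ℂ) : Com A f := by
  induction f using SimpleFunc.induction with
  | @const c s hs =>
    convert (Com.const (A := A) c).mul (h s hs) using 2 with z
    by_cases hz : z ∈ s <;> simp [hz]
  | @add f g _ hf hg => exact hf.add hg

theorem Com.all (h : ∀ E : Set α, MeasurableSet E → Com A (E.indicator (fun _ => (1:ℂ))))
    {f : α → ℂ} (hf : BddMeasurable f) : Com A f := by
  obtain ⟨hm, C, hC⟩ := hf
  have hs := hm.stronglyMeasurable
  rcases isEmpty_or_nonempty α with hα | ⟨⟨x0⟩⟩
  · have : f = fun _ => 0 := funext fun x => (hα.false x).elim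
    rw [this]; exact Com.const 0
  have hC0 : 0 ≤ C := (norm_nonneg _).trans (hC x0)
  exact Com.lim (f := fun n => hs.approxBounded C n) (C := C) (fun n => Com.simple h _)
    (fun n x => hs.norm_approxBounded_le hC0 n x)
    (fun x => hs.tendsto_approxBounded_of_norm_le (hC x))


theorem enorm_sq_eq (η : Lp ℂ 2 ν) : ‖η‖ₑ ^ (2:ℝ) = ∫⁻ z, ‖(η : α → ℂ) z‖ₑ ^ (2:ℝ) ∂ν := by
  rw [Lp.enorm_def, eLpNorm_eq_lintegral_rpow_enorm_toReal (by norm_num) (by norm_num)]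
  simp only [ENNReal.toReal_ofNat]
  rw [← ENNReal.rpow_mul]
  norm_num

theorem enorm_sq_ind {E : Set α} (hE : MeasurableSet E) (η : Lp ℂ 2 ν) :
    ‖M ν (E.indicator (fun _ => (1:ℂ))) η‖ₑ ^ (2:ℝ) = ∫⁻ z in E, ‖(η : α → ℂ) z‖ₑ ^ (2:ℝ) ∂ν := by
  rw [enorm_sq_eq, ← lintegral_indicator hE]
  apply lintegral_congr_ae
  filter_upwards [M_ae (BM.ind hE 1) η] with z hz
  rw [hz]
  by_cases h : z ∈ E <;> simp [h]

theorem exists_pos_L2 [SigmaFinite ν] : ∃ (h : α → ℝ) (φ : Lp ℂ 2 ν), Measurable h ∧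
    (∀ x, 0 < h x) ∧ (φ : α → ℂ) =ᵐ[ν] fun x => (h x : ℂ) := by
  obtain ⟨g, hg0, hgm, hgi⟩ := exists_pos_lintegral_lt_of_sigmaFinite ν (ε := 1) one_ne_zero
  have hm : Measurable (fun x => Real.sqrt (g x : ℝ)) := by fun_prop
  have hL : MemLp (fun x => ((Real.sqrt (g x : ℝ) : ℝ) : ℂ)) 2 ν := by
    refine ⟨by fun_prop, ?_⟩
    rw [eLpNorm_lt_top_iff_lintegral_rpow_enorm_lt_top (by norm_num) (by norm_num)]
    refine lt_of_le_of_lt (le_of_eq ?_) (hgi.trans ENNReal.one_lt_top)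
    refine lintegral_congr fun x => ?_
    rw [← ofReal_norm, Complex.norm_real, Real.norm_of_nonneg (Real.sqrt_nonneg _),
      ENNReal.ofReal_rpow_of_nonneg (Real.sqrt_nonneg _) (by norm_num)]
    simp
  exact ⟨_, hL.toLp _, hm, fun x => Real.sqrt_pos.2 (hg0 x), hL.coeFn_toLp⟩

theorem M_inj [SigmaFinite ν] {f g : α → ℂ} (hf : BddMeasurable f) (hg : BddMeasurable g)
    (h : M ν f = M ν g) : f =ᵐ[ν] g := by
  obtain ⟨k, φ, _, hk, hφ⟩ := exists_pos_L2 (ν := ν)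
  have h1 := M_ae hf φ
  have h2 := M_ae hg φ
  rw [h] at h1
  filter_upwards [h1, h2, hφ] with z a b c
  rw [a, c] at b
  exact mul_right_cancel₀ (by exact_mod_cast (hk z).ne') b

theorem maxab [SigmaFinite ν] (hA : ∀ f, BddMeasurable f → Commute A (M ν f)) :
    ∃ f, BddMeasurable f ∧ A = M ν f := by
  obtain ⟨h, φ, hm, hpos, hφ⟩ := exists_pos_L2 (ν := ν)
  have hcomm : ∀ f, BddMeasurable f → ∀ ξ, A (M ν f ξ) = M ν f (A ξ) := fun f hf ξ =>
    DFunLike.congr_fun (hA f hf) ξ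
  have hbound : ∀ᵐ z ∂ν, ‖(A φ : α → ℂ) z‖ ≤ ‖A‖ * h z := by
    have : (fun z => ‖(A φ : α → ℂ) z‖ₑ ^ (2:ℝ)) ≤ᵐ[ν]
        fun z => ‖A‖ₑ ^ (2:ℝ) * ‖(φ : α → ℂ) z‖ₑ ^ (2:ℝ) := by
      refine ae_le_of_forall_setLIntegral_le_of_sigmaFinite
        ((Lp.stronglyMeasurable (A φ)).measurable.enorm.pow_const _) fun s hs _ => ?_
      rw [lintegral_const_mul _ ((Lp.stronglyMeasurable φ).measurable.enorm.pow_const _),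
        ← enorm_sq_ind hs, ← enorm_sq_ind hs, ← hcomm _ (BM.ind hs 1),
        ← ENNReal.mul_rpow_of_nonneg _ _ (by norm_num)]
      exact ENNReal.rpow_le_rpow (A.le_opENorm _) (by norm_num)
    filter_upwards [this, hφ] with z hz hz2
    rw [← ENNReal.mul_rpow_of_nonneg _ _ (by norm_num), ENNReal.rpow_le_rpow_iff (by norm_num),
      ← ofReal_norm, ← ofReal_norm, ← ofReal_norm, ← ENNReal.ofReal_mul (norm_nonneg _),
      ENNReal.ofReal_le_ofReal_iff (by positivity), hz2, Complex.norm_real,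
      Real.norm_of_nonneg (hpos z).le] at hz
    exact hz
  have hA0 := norm_nonneg A
  let g1 : α → ℂ := fun z => (A φ : α → ℂ) z / (h z : ℂ)
  have hg1 : Measurable g1 := (Lp.stronglyMeasurable (A φ)).measurable.div (by fun_prop)
  let E : Set α := {z | ‖g1 z‖ ≤ ‖A‖}
  have hE : MeasurableSet E := measurableSet_le hg1.norm measurable_const
  let g : α → ℂ := E.indicator g1
  have hg : BddMeasurable g := ⟨hg1.indicator hE, ‖A‖, fun x => by
    by_cases hx : x ∈ E
    · simp only [g, Set.indicator_of_mem hx]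
      exact hx
    · simp [g, hx]⟩
  have hAφ : ∀ᵐ z ∂ν, (A φ : α → ℂ) z = g z * h z := by
    filter_upwards [hbound] with z hz
    have hh : (h z : ℂ) ≠ 0 := by exact_mod_cast (hpos z).ne'
    have : z ∈ E := by
      change ‖(A φ : α → ℂ) z / (h z : ℂ)‖ ≤ ‖A‖
      rw [norm_div, Complex.norm_real, Real.norm_of_nonneg (hpos z).le, div_le_iff₀ (hpos z)]
      exact hz
    simp only [g, Set.indicator_of_mem this, g1]
    field_simp
  refine ⟨g, hg, eq_M hg fun ξ => ?_⟩
  have hξm := (Lp.stronglyMeasurable ξ).measurable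
  have main : ∀ n : ℕ, ∀ᵐ z ∂ν, ‖(ξ : α → ℂ) z‖ ≤ n * h z →
      (A ξ : α → ℂ) z = g z * (ξ : α → ℂ) z := by
    intro n
    let F : Set α := {z | ‖(ξ : α → ℂ) z‖ ≤ n * h z}
    have hF : MeasurableSet F := measurableSet_le hξm.norm (by fun_prop)
    let f : α → ℂ := F.indicator (fun z => (ξ : α → ℂ) z / (h z : ℂ))
    have hf : BddMeasurable f := ⟨(hξm.div (by fun_prop)).indicator hF, n, fun x => by
      by_cases hx : x ∈ F
      · simp only [f, Set.indicator_of_mem hx]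
        rw [norm_div, Complex.norm_real, Real.norm_of_nonneg (hpos x).le, div_le_iff₀ (hpos x)]
        exact hx
      · simp [f, hx]⟩
    have e1 : M ν f φ = M ν (F.indicator (fun _ => (1:ℂ))) ξ := by
      apply Lp.ext
      filter_upwards [M_ae hf φ, M_ae (BM.ind hF 1) ξ, hφ] with z a b c
      rw [a, b, c]
      have hh : (h z : ℂ) ≠ 0 := by exact_mod_cast (hpos z).ne'
      by_cases hx : z ∈ F
      · simp only [f, Set.indicator_of_mem hx]
        field_simp
      · simp [f, hx]
    have e2 := congrArg A e1
    rw [hcomm _ hf, hcomm _ (BM.ind hF 1)] at e2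
    have e3 := M_ae hf (A φ)
    rw [e2] at e3
    filter_upwards [e3, M_ae (BM.ind hF 1) (A ξ), hAφ] with z a b c hz
    have hh : (h z : ℂ) ≠ 0 := by exact_mod_cast (hpos z).ne'
    have hzF : z ∈ F := hz
    rw [a, c] at b
    simp only [f, Set.indicator_of_mem hzF, one_mul] at b
    rw [← b]
    field_simp
  filter_upwards [ae_all_iff.2 main] with z hz
  obtain ⟨n, hn⟩ := exists_nat_ge (‖(ξ : α → ℂ) z‖ / h z)
  exact hz n ((div_le_iff₀ (hpos z)).1 hn)

theorem circ_cont : Continuous (fun w : Circle => (w : ℂ)) := by fun_prop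

theorem bdd_circle {c : α → Circle} (hc : Measurable c) (k : ℤ) :
    BddMeasurable (fun z => ((c z : Circle) : ℂ) ^ k) := by
  refine ⟨?_, 1, fun x => by rw [norm_zpow, Circle.norm_coe, one_zpow]⟩
  have h1 : Measurable (fun w : Circle => ((w ^ k : Circle) : ℂ)) :=
    (circ_cont.comp (continuous_zpow k)).measurable
  have h2 := h1.comp hc
  simp only [Circle.coe_zpow] at h2
  exact h2

theorem Com.circle {c : α → Circle} (h1 : Com A (fun z => (c z : ℂ)))
    (h2 : Com A (fun z => ((c z)⁻¹ : ℂ))) (F : C(Metric.sphere (0:ℂ) 1, ℂ)) :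
    Com A (fun z => F ⟨c z, (c z).2⟩) := by
  induction F using ContinuousMap.induction_on_of_compact with
  | const r => exact Com.const r
  | id => exact h1
  | star_id =>
    convert h2 using 2 with z
    rw [← Circle.coe_inv, Circle.coe_inv_eq_conj]
    rfl
  | add f g hf hg => exact hf.add hg
  | mul f g hf hg => exact hf.mul hg
  | frequently f hf =>
    obtain ⟨u, hu, hu2⟩ := exists_seq_forall_of_frequently hf
    have hb := (hu.norm.bddAbove_range)
    obtain ⟨C, hC⟩ := hb
    refine Com.lim (C := C) hu2 (fun n x => ((u n).norm_coe_le_norm _).trans (hC ⟨n, rfl⟩)) ?_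
    intro x
    exact ((continuous_eval_const (F := C(Metric.sphere (0:ℂ) 1, ℂ)) _).tendsto f).comp hu

theorem Com.circle_closed {c : α → Circle} (h1 : Com A (fun z => (c z : ℂ)))
    (h2 : Com A (fun z => ((c z)⁻¹ : ℂ))) {K : Set Circle} (hK : IsClosed K) :
    Com A ((c ⁻¹' K).indicator (fun _ => (1:ℂ))) := by
  rcases K.eq_empty_or_nonempty with rfl | hne
  · simpa using Com.const (A := A) 0
  let F : C(Metric.sphere (0:ℂ) 1, ℂ) :=
    ⟨fun w => ((max 0 (1 - Metric.infDist (⟨w.1, w.2⟩ : Circle) K) : ℝ) : ℂ), by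
      have : Continuous (fun w : Metric.sphere (0:ℂ) 1 => (⟨w.1, w.2⟩ : Circle)) :=
        continuous_induced_rng.2 continuous_subtype_val
      have h := (Metric.continuous_infDist_pt K).comp this
      exact Complex.continuous_ofReal.comp (continuous_const.max (continuous_const.sub h))⟩
  have hF := fun n => (Com.circle h1 h2 F).pow n
  have hFv : ∀ z, F ⟨c z, (c z).2⟩ = ((max 0 (1 - Metric.infDist (c z) K) : ℝ) : ℂ) := fun z => rfl
  have hn : ∀ z, 0 ≤ Metric.infDist (c z) K := fun z => Metric.infDist_nonneg
  refine Com.lim (C := 1) hF ?_ ?_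
  · intro n x
    rw [norm_pow, hFv, Complex.norm_real, Real.norm_of_nonneg (le_max_left _ _)]
    exact pow_le_one₀ (le_max_left _ _) (max_le zero_le_one (by linarith [hn x]))
  · intro x
    simp only [hFv]
    by_cases hx : c x ∈ K
    · rw [Set.indicator_of_mem (by exact hx), Metric.infDist_zero_of_mem hx]
      simp
    · rw [Set.indicator_of_notMem (by exact hx)]
      have hp : 0 < Metric.infDist (c x) K := (hK.notMem_iff_infDist_pos hne).1 hx
      apply tendsto_pow_atTop_nhds_zero_of_norm_lt_one
      rw [Complex.norm_real, Real.norm_of_nonneg (le_max_left _ _)]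
      exact max_lt zero_lt_one (by linarith)


variable {N : ℕ}

theorem meas_coord (n : ℤ) : Measurable (fun z : Solenoid N => z.val n) :=
  (measurable_pi_apply n).comp measurable_subtype_coe

theorem meas_shift : Measurable (shift N) :=
  Measurable.subtype_mk (measurable_pi_iff.2 fun n => meas_coord (n - 1))

theorem meas_shiftInv : Measurable (shiftInv N) :=
  Measurable.subtype_mk (measurable_pi_iff.2 fun n => meas_coord (n + 1))

theorem shift_shiftInv (z : Solenoid N) : shift N (shiftInv N z) = z := by
  apply Subtype.ext; funext n; simp [shift, shiftInv]

theorem shiftInv_shift (z : Solenoid N) : shiftInv N (shift N z) = z := by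
  apply Subtype.ext; funext n; simp [shift, shiftInv]

theorem shift_iter (k : ℕ) (z : Solenoid N) (m : ℤ) : ((shift N)^[k] z).val m = z.val (m - k) := by
  induction k generalizing m with
  | zero => simp
  | succ k ih =>
    rw [Function.iterate_succ_apply']
    change ((shift N)^[k] z).val (m - 1) = _
    rw [ih]; exact congrArg z.val (by push_cast; ring)

theorem shiftInv_iter (k : ℕ) (z : Solenoid N) (m : ℤ) :
    ((shiftInv N)^[k] z).val m = z.val (m + k) := by
  induction k generalizing m with
  | zero => simp
  | succ k ih =>
    rw [Function.iterate_succ_apply']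
    change ((shiftInv N)^[k] z).val (m + 1) = _
    rw [ih]; exact congrArg z.val (by push_cast; ring)

theorem shiftZ_val (n : ℤ) (z : Solenoid N) (m : ℤ) : (shiftZ N n z).val m = z.val (m - n) := by
  unfold shiftZ
  split_ifs with h
  · rw [shift_iter]; exact congrArg z.val (by omega)
  · rw [shiftInv_iter]; exact congrArg z.val (by omega)

theorem shiftZ_zero (z : Solenoid N) : shiftZ N 0 z = z := by
  apply Subtype.ext; funext m; rw [shiftZ_val, sub_zero]

theorem shiftZ_add_one (n : ℤ) (z : Solenoid N) : shiftZ N (n + 1) z = shift N (shiftZ N n z) := by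
  apply Subtype.ext; funext m
  change _ = (shiftZ N n z).val (m - 1)
  rw [shiftZ_val, shiftZ_val]; exact congrArg z.val (by ring)

theorem shiftZ_sub_one (n : ℤ) (z : Solenoid N) :
    shiftZ N (n - 1) z = shiftInv N (shiftZ N n z) := by
  apply Subtype.ext; funext m
  change _ = (shiftZ N n z).val (m + 1)
  rw [shiftZ_val, shiftZ_val]; exact congrArg z.val (by ring)

variable {ν : Measure (Solenoid N)}

theorem sigmaFinite_measShift [SigmaFinite ν] : SigmaFinite (measShift N ν) :=
  MeasurableEquiv.sigmaFinite_map
    (⟨⟨shiftInv N, shift N, shift_shiftInv, shiftInv_shift⟩, meas_shiftInv, meas_shift⟩ :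
      Solenoid N ≃ᵐ Solenoid N)

theorem qmp (hqi : QuasiInvariant N ν) : Measure.QuasiMeasurePreserving (shift N) ν ν := by
  refine ⟨meas_shift, Measure.AbsolutelyContinuous.mk fun s hs h => ?_⟩
  rw [Measure.map_apply meas_shift hs]
  apply hqi.2
  rw [measShift, Measure.map_apply meas_shiftInv (meas_shift hs)]
  convert h using 2
  ext z
  simp [shift_shiftInv]

theorem cov [SigmaFinite ν] (hqi : QuasiInvariant N ν) {F : Solenoid N → ℝ≥0∞}
    (hF : Measurable F) :
    ∫⁻ z, (measShift N ν).rnDeriv ν z * F (shift N z) ∂ν = ∫⁻ z, F z ∂ν := by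
  have := sigmaFinite_measShift (ν := ν)
  have := lintegral_rnDeriv_mul hqi.1 (hF.comp meas_shift).aemeasurable
  simp only [Function.comp_apply] at this
  rw [this, measShift, lintegral_map (f := fun x => F (shift N x)) (hF.comp meas_shift) meas_shiftInv]
  simp only [shift_shiftInv]

/-- The weight of the operator `U`. -/
noncomputable def wt (ν : Measure (Solenoid N)) (θ : Solenoid N → Circle) (z : Solenoid N) : ℂ :=
  (Real.sqrt (((measShift N ν).rnDeriv ν z).toReal) : ℂ) * (θ z : ℂ)

variable {θ : Solenoid N → Circle}

theorem wt_meas (hθ : Measurable θ) : Measurable (wt ν θ) := by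
  have h1 : Measurable (fun z => (θ z : ℂ)) :=
    circ_cont.measurable.comp hθ
  exact (Complex.measurable_ofReal.comp
    (Measure.measurable_rnDeriv _ _).ennreal_toReal.sqrt).mul h1

theorem wt_sq [SigmaFinite ν] : ∀ᵐ z ∂ν, ‖wt ν θ z‖ₑ ^ (2:ℝ) = (measShift N ν).rnDeriv ν z := by
  have := sigmaFinite_measShift (ν := ν)
  filter_upwards [Measure.rnDeriv_lt_top (measShift N ν) ν] with z hz
  rw [← ofReal_norm, wt, norm_mul, Circle.norm_coe, mul_one, Complex.norm_real,
    Real.norm_of_nonneg (Real.sqrt_nonneg _),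
    ENNReal.ofReal_rpow_of_nonneg (Real.sqrt_nonneg _) (by norm_num)]
  simp [Real.sq_sqrt, hz.ne]

theorem wt_ne [SigmaFinite ν] (hqi : QuasiInvariant N ν) : ∀ᵐ z ∂ν, wt ν θ z ≠ 0 := by
  have := sigmaFinite_measShift (ν := ν)
  filter_upwards [Measure.rnDeriv_pos' hqi.2, wt_sq (ν := ν) (θ := θ)] with z h1 h2 h3
  rw [h3] at h2
  simp at h2
  exact h1.ne h2

theorem eLpNorm_wt [SigmaFinite ν] (hqi : QuasiInvariant N ν)
    {g : Solenoid N → ℂ} (hg : Measurable g) :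
    eLpNorm (fun z => wt ν θ z * g (shift N z)) 2 ν = eLpNorm g 2 ν := by
  rw [eLpNorm_eq_lintegral_rpow_enorm_toReal (by norm_num) (by norm_num),
    eLpNorm_eq_lintegral_rpow_enorm_toReal (by norm_num) (by norm_num)]
  simp only [ENNReal.toReal_ofNat]
  congr 1
  rw [← cov hqi (hg.enorm.pow_const _)]
  apply lintegral_congr_ae
  filter_upwards [wt_sq (ν := ν) (θ := θ)] with z h
  rw [enorm_mul, ENNReal.mul_rpow_of_nonneg _ _ (by norm_num), h]

theorem memLp_wt [SigmaFinite ν] (hqi : QuasiInvariant N ν) (hθ : Measurable θ) (ξ : Lp ℂ 2 ν) :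
    MemLp (fun z => wt ν θ z * (ξ : Solenoid N → ℂ) (shift N z)) 2 ν := by
  have hm := (Lp.stronglyMeasurable ξ).measurable
  refine ⟨((wt_meas hθ).mul (hm.comp meas_shift)).aestronglyMeasurable, ?_⟩
  rw [eLpNorm_wt hqi hm]
  exact (Lp.memLp ξ).2

theorem exists_U [SigmaFinite ν] (hqi : QuasiInvariant N ν) (hθ : Measurable θ) :
    ∃ U : unitary (Lp ℂ 2 ν →L[ℂ] Lp ℂ 2 ν), ∀ ξ : Lp ℂ 2 ν,
      (((U : Lp ℂ 2 ν →L[ℂ] Lp ℂ 2 ν) ξ : Lp ℂ 2 ν) : Solenoid N → ℂ) =ᵐ[ν]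
        fun z => wt ν θ z * (ξ : Solenoid N → ℂ) (shift N z) := by
  have hq := qmp hqi
  let L : Lp ℂ 2 ν →ₗᵢ[ℂ] Lp ℂ 2 ν :=
    { toFun := fun ξ => (memLp_wt hqi hθ ξ).toLp _
      map_add' := by
        intro ξ η
        apply Lp.ext
        filter_upwards [(memLp_wt hqi hθ (ξ + η)).coeFn_toLp, (memLp_wt hqi hθ ξ).coeFn_toLp,
          (memLp_wt hqi hθ η).coeFn_toLp, hq.ae (Lp.coeFn_add ξ η),
          Lp.coeFn_add ((memLp_wt hqi hθ ξ).toLp _) ((memLp_wt hqi hθ η).toLp _)]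
          with z h1 h2 h3 h4 h5
        rw [h1, h5, Pi.add_apply, h2, h3, h4, Pi.add_apply, mul_add]
      map_smul' := by
        intro c ξ
        apply Lp.ext
        filter_upwards [(memLp_wt hqi hθ (c • ξ)).coeFn_toLp, (memLp_wt hqi hθ ξ).coeFn_toLp,
          hq.ae (Lp.coeFn_smul c ξ),
          Lp.coeFn_smul c ((memLp_wt hqi hθ ξ).toLp _)] with z h1 h2 h4 h5
        rw [h1, RingHom.id_apply, h5, Pi.smul_apply, h2, h4, Pi.smul_apply, smul_eq_mul,
          smul_eq_mul, mul_left_comm]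
      norm_map' := by
        intro ξ
        change ‖(memLp_wt hqi hθ ξ).toLp _‖ = _
        rw [Lp.norm_toLp, eLpNorm_wt hqi (Lp.stronglyMeasurable ξ).measurable, Lp.norm_def] }
  have hL : ∀ ξ, (L ξ : Solenoid N → ℂ) =ᵐ[ν]
      fun z => wt ν θ z * (ξ : Solenoid N → ℂ) (shift N z) :=
    fun ξ => (memLp_wt hqi hθ ξ).coeFn_toLp
  have hsurj : Function.Surjective L := by
    intro η
    let g : Solenoid N → ℂ := fun z =>
      (η : Solenoid N → ℂ) (shiftInv N z) / wt ν θ (shiftInv N z)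
    have hgm : Measurable g :=
      ((Lp.stronglyMeasurable η).measurable.comp meas_shiftInv).div
        ((wt_meas hθ).comp meas_shiftInv)
    have hge : (fun z => wt ν θ z * g (shift N z)) =ᵐ[ν] (η : Solenoid N → ℂ) := by
      filter_upwards [wt_ne (θ := θ) hqi] with z hz
      simp only [g, shiftInv_shift]
      field_simp
    have hg : MemLp g 2 ν := by
      refine ⟨hgm.aestronglyMeasurable, ?_⟩
      rw [← eLpNorm_wt (θ := θ) hqi hgm, eLpNorm_congr_ae hge]
      exact (Lp.memLp η).2
    refine ⟨hg.toLp g, Lp.ext ?_⟩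
    filter_upwards [hL (hg.toLp g), hq.ae hg.coeFn_toLp, hge] with z h1 h2 h3
    rw [h1, h2, h3]
  exact ⟨Unitary.linearIsometryEquiv.symm (LinearIsometryEquiv.ofSurjective L hsurj), hL⟩

theorem exists_T {c : Solenoid N → Circle} (hc : Measurable c) :
    ∃ T : unitary (Lp ℂ 2 ν →L[ℂ] Lp ℂ 2 ν),
      (T : Lp ℂ 2 ν →L[ℂ] Lp ℂ 2 ν) = M ν (fun z => (c z : ℂ)) := by
  have hb : ∀ k : ℤ, _ := bdd_circle hc
  have hb1 : BddMeasurable (fun z => (c z : ℂ)) := by simpa using hb 1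
  have hb2 : BddMeasurable (fun z => (c z : ℂ)⁻¹) := by simpa using hb (-1)
  let L : Lp ℂ 2 ν →ₗᵢ[ℂ] Lp ℂ 2 ν :=
    { (M ν (fun z => (c z : ℂ)) : Lp ℂ 2 ν →ₗ[ℂ] Lp ℂ 2 ν) with
      norm_map' := by
        intro ξ
        change ‖M ν (fun z => (c z : ℂ)) ξ‖ = ‖ξ‖
        rw [Lp.norm_def, Lp.norm_def]
        congr 1
        apply eLpNorm_congr_norm_ae
        filter_upwards [M_ae hb1 ξ] with z hz
        rw [hz, norm_mul, Circle.norm_coe, one_mul] }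
  have hsurj : Function.Surjective L := by
    intro η
    refine ⟨M ν (fun z => (c z : ℂ)⁻¹) η, ?_⟩
    change (M ν (fun z => (c z : ℂ)) * M ν (fun z => (c z : ℂ)⁻¹)) η = η
    rw [M_mul hb1 hb2]
    simp [M_one]
  refine ⟨Unitary.linearIsometryEquiv.symm (LinearIsometryEquiv.ofSurjective L hsurj), ?_⟩
  ext1 ξ
  rfl

theorem T_zpow {c : Solenoid N → Circle} (hc : Measurable c)
    {T : unitary (Lp ℂ 2 ν →L[ℂ] Lp ℂ 2 ν)}
    (hT : (T : Lp ℂ 2 ν →L[ℂ] Lp ℂ 2 ν) = M ν (fun z => (c z : ℂ))) (k : ℤ) :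
    ((T ^ k : unitary _) : Lp ℂ 2 ν →L[ℂ] Lp ℂ 2 ν) = M ν (fun z => (c z : ℂ) ^ k) := by
  have hb : ∀ k : ℤ, _ := bdd_circle hc
  have hb1 : BddMeasurable (fun z => (c z : ℂ)) := by simpa using hb 1
  have hb2 : BddMeasurable (fun z => (c z : ℂ)⁻¹) := by simpa using hb (-1)
  have hTi : ((T⁻¹ : unitary _) : Lp ℂ 2 ν →L[ℂ] Lp ℂ 2 ν) = M ν (fun z => (c z : ℂ)⁻¹) := by
    have h1 : M ν (fun z => (c z : ℂ)⁻¹) * (T : Lp ℂ 2 ν →L[ℂ] Lp ℂ 2 ν) = 1 := by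
      rw [hT, M_mul hb2 hb1]
      simp [M_one]
    have h2 : (T : Lp ℂ 2 ν →L[ℂ] Lp ℂ 2 ν) * ((T⁻¹ : unitary _) : Lp ℂ 2 ν →L[ℂ] Lp ℂ 2 ν) = 1 := by
      rw [← Submonoid.coe_mul, mul_inv_cancel]; rfl
    exact (left_inv_eq_right_inv h1 h2).symm
  induction k using Int.induction_on with
  | zero => simp [M_one]
  | succ i ih =>
    rw [zpow_add_one, Submonoid.coe_mul, ih, hT, M_mul (hb _) hb1]
    refine congrArg (M ν) (funext fun z => ?_)
    rw [zpow_add_one₀ (Circle.coe_ne_zero _)]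
  | pred i ih =>
    rw [zpow_sub_one, Submonoid.coe_mul, ih, hTi, M_mul (hb _) hb2]
    refine congrArg (M ν) (funext fun z => ?_)
    rw [zpow_sub_one₀ (Circle.coe_ne_zero _)]

theorem BM.comp {f : Solenoid N → ℂ} (hf : BddMeasurable f) {s : Solenoid N → Solenoid N}
    (hs : Measurable s) : BddMeasurable (fun z => f (s z)) :=
  ⟨hf.1.comp hs, hf.2.imp fun _ hC x => hC (s x)⟩

theorem assoc5 {R : Type*} [Monoid R] (a b m c d : R) :
    a * b * m * (c * d) = a * (b * m * c) * d := by simp only [mul_assoc]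

theorem coe_mul_inv (U : unitary (Lp ℂ 2 ν →L[ℂ] Lp ℂ 2 ν)) :
    (U : Lp ℂ 2 ν →L[ℂ] Lp ℂ 2 ν) * ((U⁻¹ : unitary _) : Lp ℂ 2 ν →L[ℂ] Lp ℂ 2 ν) = 1 := by
  rw [← Submonoid.coe_mul, mul_inv_cancel]; rfl

theorem coe_inv_mul (U : unitary (Lp ℂ 2 ν →L[ℂ] Lp ℂ 2 ν)) :
    ((U⁻¹ : unitary _) : Lp ℂ 2 ν →L[ℂ] Lp ℂ 2 ν) * (U : Lp ℂ 2 ν →L[ℂ] Lp ℂ 2 ν) = 1 := by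
  rw [← Submonoid.coe_mul, inv_mul_cancel]; rfl

theorem U_M
    {U : unitary (Lp ℂ 2 ν →L[ℂ] Lp ℂ 2 ν)} (hqi : QuasiInvariant N ν)
    (hU : ∀ ξ : Lp ℂ 2 ν,
      (((U : Lp ℂ 2 ν →L[ℂ] Lp ℂ 2 ν) ξ : Lp ℂ 2 ν) : Solenoid N → ℂ) =ᵐ[ν]
        fun z => wt ν θ z * (ξ : Solenoid N → ℂ) (shift N z))
    {f : Solenoid N → ℂ} (hf : BddMeasurable f) :
    (U : Lp ℂ 2 ν →L[ℂ] Lp ℂ 2 ν) * M ν f = M ν (fun z => f (shift N z)) * U := by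
  ext1 ξ
  apply Lp.ext
  filter_upwards [hU (M ν f ξ), (qmp hqi).ae (M_ae hf ξ), M_ae (BM.comp hf meas_shift)
    ((U : Lp ℂ 2 ν →L[ℂ] Lp ℂ 2 ν) ξ), hU ξ] with z h1 h2 h3 h4
  rw [mul_apply_eq_comp, mul_apply_eq_comp, h1, h2, h3, h4]
  ring

theorem U_M_conj
    {U : unitary (Lp ℂ 2 ν →L[ℂ] Lp ℂ 2 ν)} (hqi : QuasiInvariant N ν)
    (hU : ∀ ξ : Lp ℂ 2 ν,
      (((U : Lp ℂ 2 ν →L[ℂ] Lp ℂ 2 ν) ξ : Lp ℂ 2 ν) : Solenoid N → ℂ) =ᵐ[ν]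
        fun z => wt ν θ z * (ξ : Solenoid N → ℂ) (shift N z))
    {f : Solenoid N → ℂ} (hf : BddMeasurable f) :
    (U : Lp ℂ 2 ν →L[ℂ] Lp ℂ 2 ν) * M ν f * ((U⁻¹ : unitary _) : Lp ℂ 2 ν →L[ℂ] Lp ℂ 2 ν)
      = M ν (fun z => f (shift N z)) := by
  rw [U_M hqi hU hf, mul_assoc, coe_mul_inv, mul_one]

theorem Ui_M_conj
    {U : unitary (Lp ℂ 2 ν →L[ℂ] Lp ℂ 2 ν)} (hqi : QuasiInvariant N ν)
    (hU : ∀ ξ : Lp ℂ 2 ν,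
      (((U : Lp ℂ 2 ν →L[ℂ] Lp ℂ 2 ν) ξ : Lp ℂ 2 ν) : Solenoid N → ℂ) =ᵐ[ν]
        fun z => wt ν θ z * (ξ : Solenoid N → ℂ) (shift N z))
    {f : Solenoid N → ℂ} (hf : BddMeasurable f) :
    ((U⁻¹ : unitary _) : Lp ℂ 2 ν →L[ℂ] Lp ℂ 2 ν) * M ν f * (U : Lp ℂ 2 ν →L[ℂ] Lp ℂ 2 ν)
      = M ν (fun z => f (shiftInv N z)) := by
  have h := U_M hqi hU (BM.comp hf meas_shiftInv)
  simp only [shiftInv_shift] at h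
  rw [mul_assoc, ← h, ← mul_assoc, coe_inv_mul, one_mul]

set_option maxHeartbeats 2000000 in
theorem U_zpow_conj
    {U : unitary (Lp ℂ 2 ν →L[ℂ] Lp ℂ 2 ν)} (hqi : QuasiInvariant N ν)
    (hU : ∀ ξ : Lp ℂ 2 ν,
      (((U : Lp ℂ 2 ν →L[ℂ] Lp ℂ 2 ν) ξ : Lp ℂ 2 ν) : Solenoid N → ℂ) =ᵐ[ν]
        fun z => wt ν θ z * (ξ : Solenoid N → ℂ) (shift N z))
    (n : ℤ) : ∀ {f : Solenoid N → ℂ} (_ : BddMeasurable f),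
    ((U ^ n : unitary _) : Lp ℂ 2 ν →L[ℂ] Lp ℂ 2 ν) * M ν f *
      ((U ^ (-n) : unitary _) : Lp ℂ 2 ν →L[ℂ] Lp ℂ 2 ν) = M ν (fun z => f (shiftZ N n z)) := by
  induction n using Int.induction_on with
  | zero => intro f hf; simp [shiftZ_zero]
  | succ i ih =>
    intro f hf
    have h1 : U ^ (-((i:ℤ) + 1)) = U⁻¹ * U ^ (-(i:ℤ)) := by
      rw [neg_add, add_comm, zpow_add, zpow_neg_one]
    rw [h1, zpow_add_one, Submonoid.coe_mul, Submonoid.coe_mul]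
    simp only [shiftZ_add_one]
    rw [assoc5, U_M_conj hqi hU hf]
    exact ih (BM.comp hf meas_shift)
  | pred i ih =>
    intro f hf
    have h1 : U ^ (-(-(i:ℤ) - 1)) = U * U ^ (-(-(i:ℤ))) := by
      rw [neg_sub, sub_eq_add_neg, zpow_add, zpow_one]
    rw [h1, zpow_sub_one, Submonoid.coe_mul, Submonoid.coe_mul]
    simp only [shiftZ_sub_one]
    rw [assoc5, Ui_M_conj hqi hU hf]
    exact ih (BM.comp hf meas_shiftInv)

theorem com_all_of_coord {A : Lp ℂ 2 ν →L[ℂ] Lp ℂ 2 ν}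
    (h : ∀ n k : ℤ, Commute A (M ν (fun z => ((z.val n : Circle) : ℂ) ^ k)))
    {f : Solenoid N → ℂ} (hf : BddMeasurable f) : Commute A (M ν f) := by
  have hc : ∀ n k : ℤ, Com A (fun z : Solenoid N => ((z.val n : Circle) : ℂ) ^ k) := fun n k =>
    ⟨bdd_circle (meas_coord n) k, h n k⟩
  refine (Com.all (A := A) ?_ hf).2
  have hid : @Measurable _ _ (comSigma A) _ (id : Solenoid N → Solenoid N) := by
    have h1 : ∀ n, @Measurable _ _ (comSigma A) _ (fun z : Solenoid N => z.val n) := by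
      intro n
      refine @measurable_of_isClosed _ _ _ _ _ (comSigma A) _ fun K hK => ?_
      exact Com.circle_closed (by simpa using hc n 1) (by simpa using hc n (-1)) hK
    exact @Measurable.subtype_mk _ _ (comSigma A) _ _ _ (@measurable_pi_iff _ _ _ (comSigma A) _ _ |>.2 h1) _
  intro E hE
  exact hid hE

theorem meas_shiftZ (n : ℤ) : Measurable (shiftZ N n) := by
  unfold shiftZ
  split_ifs
  · exact meas_shift.iterate _
  · exact meas_shiftInv.iterate _

theorem charOp'
    {U T : unitary (Lp ℂ 2 ν →L[ℂ] Lp ℂ 2 ν)} (hqi : QuasiInvariant N ν)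
    (hU : ∀ ξ : Lp ℂ 2 ν,
      (((U : Lp ℂ 2 ν →L[ℂ] Lp ℂ 2 ν) ξ : Lp ℂ 2 ν) : Solenoid N → ℂ) =ᵐ[ν]
        fun z => wt ν θ z * (ξ : Solenoid N → ℂ) (shift N z))
    (hT : (T : Lp ℂ 2 ν →L[ℂ] Lp ℂ 2 ν) = M ν (fun z => ((z.val 0 : Circle) : ℂ)))
    (n k : ℤ) :
    ((U ^ n * T ^ k * U ^ (-n) : unitary _) : Lp ℂ 2 ν →L[ℂ] Lp ℂ 2 ν) =
      M ν (fun z => ((z.val (-n) : Circle) : ℂ) ^ k) := by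
  rw [Submonoid.coe_mul, Submonoid.coe_mul, T_zpow (meas_coord 0) hT,
    U_zpow_conj hqi hU n (bdd_circle (meas_coord 0) k)]
  refine congrArg (M ν) (funext fun z => ?_)
  rw [shiftZ_val, zero_sub]

theorem charOp
    {U T : unitary (Lp ℂ 2 ν →L[ℂ] Lp ℂ 2 ν)} (hqi : QuasiInvariant N ν)
    (hU : ∀ ξ : Lp ℂ 2 ν,
      (((U : Lp ℂ 2 ν →L[ℂ] Lp ℂ 2 ν) ξ : Lp ℂ 2 ν) : Solenoid N → ℂ) =ᵐ[ν]
        fun z => wt ν θ z * (ξ : Solenoid N → ℂ) (shift N z))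
    (hT : (T : Lp ℂ 2 ν →L[ℂ] Lp ℂ 2 ν) = M ν (fun z => ((z.val 0 : Circle) : ℂ)))
    (n k : ℤ) :
    ((U ^ (-n) * T ^ k * U ^ n : unitary _) : Lp ℂ 2 ν →L[ℂ] Lp ℂ 2 ν) =
      M ν (fun z => ((z.val n : Circle) : ℂ) ^ k) := by
  have h := charOp' hqi hU hT (-n) k
  rw [neg_neg] at h
  exact h

theorem bs_rel
    {U T : unitary (Lp ℂ 2 ν →L[ℂ] Lp ℂ 2 ν)} (hqi : QuasiInvariant N ν)
    (hU : ∀ ξ : Lp ℂ 2 ν,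
      (((U : Lp ℂ 2 ν →L[ℂ] Lp ℂ 2 ν) ξ : Lp ℂ 2 ν) : Solenoid N → ℂ) =ᵐ[ν]
        fun z => wt ν θ z * (ξ : Solenoid N → ℂ) (shift N z))
    (hT : (T : Lp ℂ 2 ν →L[ℂ] Lp ℂ 2 ν) = M ν (fun z => ((z.val 0 : Circle) : ℂ)))
    : U * T * U⁻¹ = T ^ N := by
  apply Subtype.ext
  have hb0 : BddMeasurable (fun z : Solenoid N => ((z.val 0 : Circle) : ℂ)) := by
    simpa using bdd_circle (meas_coord (N := N) 0) 1
  have h1 := T_zpow (meas_coord 0) hT N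
  rw [zpow_natCast] at h1
  rw [h1, Submonoid.coe_mul, Submonoid.coe_mul, hT, U_M_conj hqi hU hb0]
  refine congrArg (M ν) (funext fun z => ?_)
  have h2 := z.property (0 - 1)
  rw [sub_add_cancel] at h2
  change ((z.val (0 - 1) : Circle) : ℂ) = _
  rw [← h2, zpow_natCast, Circle.coe_pow]

theorem exists_M_of_commute
    {U T : unitary (Lp ℂ 2 ν →L[ℂ] Lp ℂ 2 ν)} (hqi : QuasiInvariant N ν)
    (hU : ∀ ξ : Lp ℂ 2 ν,
      (((U : Lp ℂ 2 ν →L[ℂ] Lp ℂ 2 ν) ξ : Lp ℂ 2 ν) : Solenoid N → ℂ) =ᵐ[ν]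
        fun z => wt ν θ z * (ξ : Solenoid N → ℂ) (shift N z))
    (hT : (T : Lp ℂ 2 ν →L[ℂ] Lp ℂ 2 ν) = M ν (fun z => ((z.val 0 : Circle) : ℂ)))
    [SigmaFinite ν] (A : Lp ℂ 2 ν →L[ℂ] Lp ℂ 2 ν)
    (hA : ∀ n k : ℤ,
      Commute A ((U ^ n * T ^ k * U ^ (-n) : unitary _) : Lp ℂ 2 ν →L[ℂ] Lp ℂ 2 ν)) :
    ∃ f, BddMeasurable f ∧ A = M ν f := by
  refine maxab fun f hf => com_all_of_coord (fun n k => ?_) hf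
  have h := hA (-n) k
  rw [charOp' hqi hU hT, neg_neg] at h
  exact h

theorem commutant_iff
    {U T : unitary (Lp ℂ 2 ν →L[ℂ] Lp ℂ 2 ν)} (hqi : QuasiInvariant N ν)
    (hU : ∀ ξ : Lp ℂ 2 ν,
      (((U : Lp ℂ 2 ν →L[ℂ] Lp ℂ 2 ν) ξ : Lp ℂ 2 ν) : Solenoid N → ℂ) =ᵐ[ν]
        fun z => wt ν θ z * (ξ : Solenoid N → ℂ) (shift N z))
    (hT : (T : Lp ℂ 2 ν →L[ℂ] Lp ℂ 2 ν) = M ν (fun z => ((z.val 0 : Circle) : ℂ)))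
    [SigmaFinite ν] (A : Lp ℂ 2 ν →L[ℂ] Lp ℂ 2 ν) :
    (Commute A (U : Lp ℂ 2 ν →L[ℂ] Lp ℂ 2 ν) ∧
         Commute A (T : Lp ℂ 2 ν →L[ℂ] Lp ℂ 2 ν)) ↔
        ∃ f : Solenoid N → ℂ, BddMeasurable f ∧
          (fun z => f (shift N z)) =ᵐ[ν] f ∧
          ∀ ξ : Lp ℂ 2 ν, (A ξ : Solenoid N → ℂ) =ᵐ[ν]
            fun z => f z * (ξ : Solenoid N → ℂ) z := by
  have hb0 : BddMeasurable (fun z : Solenoid N => ((z.val 0 : Circle) : ℂ)) := by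
    simpa using bdd_circle (meas_coord (N := N) 0) 1
  constructor
  · rintro ⟨h1, h2⟩
    have hinv : ∀ V : unitary (Lp ℂ 2 ν →L[ℂ] Lp ℂ 2 ν),
        Commute A (V : Lp ℂ 2 ν →L[ℂ] Lp ℂ 2 ν) →
        Commute A ((V⁻¹ : unitary _) : Lp ℂ 2 ν →L[ℂ] Lp ℂ 2 ν) := by
      intro V hV
      let u : (Lp ℂ 2 ν →L[ℂ] Lp ℂ 2 ν)ˣ :=
        ⟨(V : Lp ℂ 2 ν →L[ℂ] Lp ℂ 2 ν), ((V⁻¹ : unitary _) : Lp ℂ 2 ν →L[ℂ] Lp ℂ 2 ν),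
          coe_mul_inv V, coe_inv_mul V⟩
      exact Commute.units_inv_right (u := u) hV
    have hz : ∀ V : unitary (Lp ℂ 2 ν →L[ℂ] Lp ℂ 2 ν),
        Commute A (V : Lp ℂ 2 ν →L[ℂ] Lp ℂ 2 ν) → ∀ n : ℤ,
        Commute A ((V ^ n : unitary _) : Lp ℂ 2 ν →L[ℂ] Lp ℂ 2 ν) := by
      intro V hV n
      induction n using Int.induction_on with
      | zero => rw [zpow_zero]; exact Commute.one_right A
      | succ i ih => rw [zpow_add_one, Submonoid.coe_mul]; exact ih.mul_right hV
      | pred i ih => rw [zpow_sub_one, Submonoid.coe_mul]; exact ih.mul_right (hinv V hV)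
    obtain ⟨f, hf, hA⟩ := exists_M_of_commute hqi hU hT A (fun n k => by
      rw [Submonoid.coe_mul, Submonoid.coe_mul]
      exact ((hz U h1 n).mul_right (hz T h2 k)).mul_right (hz U h1 (-n)))
    refine ⟨f, hf, ?_, fun ξ => by rw [hA]; exact M_ae hf ξ⟩
    apply M_inj (BM.comp hf meas_shift) hf
    rw [← U_M_conj hqi hU hf, ← hA, ← h1.eq, mul_assoc, coe_mul_inv, mul_one]
  · rintro ⟨f, hf, hfs, hA⟩
    rw [eq_M hf hA, hT]
    refine ⟨?_, M_comm hf hb0⟩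
    have he : M ν f = M ν (fun z => f (shift N z)) := by
      apply eq_M (BM.comp hf meas_shift)
      intro ξ
      filter_upwards [M_ae hf ξ, hfs] with z h1 h2
      rw [h1, h2]
    have h := U_M hqi hU hf
    rw [← he] at h
    exact h.symm

theorem irred_iff
    {U T : unitary (Lp ℂ 2 ν →L[ℂ] Lp ℂ 2 ν)} (hqi : QuasiInvariant N ν)
    [SigmaFinite ν] (h3a : ∀ A : Lp ℂ 2 ν →L[ℂ] Lp ℂ 2 ν,
      (Commute A (U : Lp ℂ 2 ν →L[ℂ] Lp ℂ 2 ν) ∧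
         Commute A (T : Lp ℂ 2 ν →L[ℂ] Lp ℂ 2 ν)) ↔
        ∃ f : Solenoid N → ℂ, BddMeasurable f ∧
          (fun z => f (shift N z)) =ᵐ[ν] f ∧
          ∀ ξ : Lp ℂ 2 ν, (A ξ : Solenoid N → ℂ) =ᵐ[ν]
            fun z => f z * (ξ : Solenoid N → ℂ) z) :
    (∀ A : Lp ℂ 2 ν →L[ℂ] Lp ℂ 2 ν,
          Commute A (U : Lp ℂ 2 ν →L[ℂ] Lp ℂ 2 ν) →
          Commute A (T : Lp ℂ 2 ν →L[ℂ] Lp ℂ 2 ν) →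
          ∃ c : ℂ, A = c • (1 : Lp ℂ 2 ν →L[ℂ] Lp ℂ 2 ν)) ↔
        ShiftErgodic N ν := by
  constructor
  · intro h E hE hinv
    have hb := BM.ind hE (1:ℂ)
    obtain ⟨h1, h2⟩ := (h3a (M ν (E.indicator fun _ => (1:ℂ)))).2 ⟨_, hb, by
      refine Eventually.of_forall fun z => ?_
      have : shift N z ∈ E ↔ z ∈ E := by
        conv_rhs => rw [← hinv]
        rfl
      by_cases hz : z ∈ E
      · simp [hz, this.2 hz]
      · simp [hz, mt this.1 hz], M_ae hb⟩
    obtain ⟨c, hc⟩ := h _ h1 h2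
    rw [← M_const] at hc
    have he := M_inj hb (bdd_const c) hc
    by_cases hc0 : c = 0
    · left
      refine measure_mono_null (fun z hz => ?_) (ae_iff.1 he)
      simp [hz, hc0]
    · right
      refine measure_mono_null (fun z hz => ?_) (ae_iff.1 he)
      have hz' : z ∉ E := hz
      simp [hz', Ne.symm hc0]
  · intro h A h1 h2
    obtain ⟨f, hf, hfs, hA⟩ := (h3a A).1 ⟨h1, h2⟩
    have hq : QuasiErgodic (shift N) ν :=
      { toQuasiMeasurePreserving := qmp hqi
        toPreErgodic := ⟨fun s hs hi => by
          rw [eventuallyConst_set']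
          rcases h s hs hi with h0 | h0
          · left; exact ae_eq_empty.2 h0
          · right; exact ae_eq_univ.2 h0⟩ }
    obtain ⟨c, hc⟩ := hq.ae_eq_const_of_ae_eq_comp₀ hf.1.nullMeasurable hfs
    refine ⟨c, ?_⟩
    rw [← M_const]
    apply eq_M (bdd_const c)
    intro ξ
    filter_upwards [hA ξ, hc] with z h1 h2
    rw [h1, h2]
    rfl

end SolHelp
end Helpers

set_option maxHeartbeats 2000000 in
open MeasureTheory Real Complex Filter Finset in
/-- Proposition 2.2. Given a σ-finite quasi-invariant measure `ν`
on the solenoid and a measurable `θ : S_N → 𝕋`, the operators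
`Uξ = √Δ·θ·(ξ∘S)` and `(Tξ)(z) = z₀ ξ(z)` on `L²(ν)` are unitary and satisfy
`U T U⁻¹ = T^N`, hence define a representation `π_{ν,θ}` of `BS(1,N)`; moreover
`Uⁿ M_f U⁻ⁿ = M_{f∘Sⁿ}`, `U⁻ⁿ T^k Uⁿ` is multiplication by the character `χ_{k/Nⁿ}`,
the von Neumann algebra generated by `{Uⁿ T^k U⁻ⁿ}` is `{M_f : f ∈ L^∞(ν)}`, the
commutant is `{M_f : f∘S = f ν-a.e.}`, and the representation is irreducible iff
`S` is ergodic w.r.t. `ν`. -/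
theorem statement_2 (N : ℕ) (hN : 2 ≤ N)
    (ν : Measure (Solenoid N)) [SigmaFinite ν] (hqi : QuasiInvariant N ν)
    (θ : Solenoid N → Circle) (hθ : Measurable θ) :
    ∃ U T : unitary (Lp ℂ 2 ν →L[ℂ] Lp ℂ 2 ν),
      -- (1) the operators are (well-defined) unitaries given by the formulas, and
      -- satisfy the Baumslag–Solitar relation
      IsPiNuTheta N ν θ U T ∧
      U * T * U⁻¹ = T ^ N ∧
      -- (2a) `Uⁿ M_f U⁻ⁿ = M_{f ∘ Sⁿ}` for `f ∈ L^∞(ν)`, `n ∈ ℤ`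
      (∀ f : Solenoid N → ℂ, BddMeasurable f →
        ∀ A : Lp ℂ 2 ν →L[ℂ] Lp ℂ 2 ν,
          (∀ ξ : Lp ℂ 2 ν, (A ξ : Solenoid N → ℂ) =ᵐ[ν]
              fun z => f z * (ξ : Solenoid N → ℂ) z) →
          ∀ n : ℤ, ∀ ξ : Lp ℂ 2 ν,
            ((((U ^ n : unitary _) : Lp ℂ 2 ν →L[ℂ] Lp ℂ 2 ν) *
                A * ((U ^ (-n) : unitary _) : Lp ℂ 2 ν →L[ℂ] Lp ℂ 2 ν)) ξ
              : Solenoid N → ℂ) =ᵐ[ν]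
              fun z => f (shiftZ N n z) * (ξ : Solenoid N → ℂ) z) ∧
      -- (2b) `U⁻ⁿ T^k Uⁿ` is multiplication by the character `k/Nⁿ`,
      -- i.e. by `z ↦ (z_n)^k`
      (∀ n k : ℤ, ∀ ξ : Lp ℂ 2 ν,
        ((((U ^ (-n) * T ^ k * U ^ n : unitary _) :
            Lp ℂ 2 ν →L[ℂ] Lp ℂ 2 ν)) ξ : Solenoid N → ℂ) =ᵐ[ν]
          fun z => ((z.val n : Circle) : ℂ) ^ k * (ξ : Solenoid N → ℂ) z) ∧
      -- (2c) the von Neumann algebra generated by `{Uⁿ T^k U⁻ⁿ}` (its double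
      -- commutant) is exactly the algebra of multiplication operators `M_f`,
      -- `f ∈ L^∞(ν)`
      (∀ B : Lp ℂ 2 ν →L[ℂ] Lp ℂ 2 ν,
        (∀ A : Lp ℂ 2 ν →L[ℂ] Lp ℂ 2 ν,
          (∀ n k : ℤ,
            Commute A ((U ^ n * T ^ k * U ^ (-n) : unitary _) : Lp ℂ 2 ν →L[ℂ] Lp ℂ 2 ν)) →
          Commute A B) ↔
        ∃ f : Solenoid N → ℂ, BddMeasurable f ∧
          ∀ ξ : Lp ℂ 2 ν, (B ξ : Solenoid N → ℂ) =ᵐ[ν]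
            fun z => f z * (ξ : Solenoid N → ℂ) z) ∧
      -- (3a) the commutant of the representation is
      -- `{M_f : f ∈ L^∞(ν), f∘S = f ν-a.e.}`
      (∀ A : Lp ℂ 2 ν →L[ℂ] Lp ℂ 2 ν,
        (Commute A (U : Lp ℂ 2 ν →L[ℂ] Lp ℂ 2 ν) ∧
         Commute A (T : Lp ℂ 2 ν →L[ℂ] Lp ℂ 2 ν)) ↔
        ∃ f : Solenoid N → ℂ, BddMeasurable f ∧
          (fun z => f (shift N z)) =ᵐ[ν] f ∧
          ∀ ξ : Lp ℂ 2 ν, (A ξ : Solenoid N → ℂ) =ᵐ[ν]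
            fun z => f z * (ξ : Solenoid N → ℂ) z) ∧
      -- (3b) irreducibility (trivial commutant) holds iff `S` is ergodic w.r.t. `ν`
      ((∀ A : Lp ℂ 2 ν →L[ℂ] Lp ℂ 2 ν,
          Commute A (U : Lp ℂ 2 ν →L[ℂ] Lp ℂ 2 ν) →
          Commute A (T : Lp ℂ 2 ν →L[ℂ] Lp ℂ 2 ν) →
          ∃ c : ℂ, A = c • (1 : Lp ℂ 2 ν →L[ℂ] Lp ℂ 2 ν)) ↔
        ShiftErgodic N ν) := by
  obtain ⟨U, hU⟩ := SolHelp.exists_U hqi hθ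
  obtain ⟨T, hT⟩ := SolHelp.exists_T (ν := ν) (SolHelp.meas_coord (N := N) 0)
  have hb : ∀ n k : ℤ, BddMeasurable (fun z : Solenoid N => ((z.val n : Circle) : ℂ) ^ k) :=
    fun n k => SolHelp.bdd_circle (SolHelp.meas_coord n) k
  have hb0 : BddMeasurable (fun z : Solenoid N => ((z.val 0 : Circle) : ℂ)) := by
    simpa using hb 0 1
  have hchar := SolHelp.charOp hqi hU hT
  have hcomm := SolHelp.exists_M_of_commute hqi hU hT
  have h3a := SolHelp.commutant_iff hqi hU hT
  refine ⟨U, T, ⟨hU, fun ξ => ?_⟩, SolHelp.bs_rel hqi hU hT, ?_, ?_, ?_, h3a, ?_⟩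
  · rw [hT]
    exact SolHelp.M_ae hb0 ξ
  · intro f hf A hA n ξ
    rw [SolHelp.eq_M hf hA, SolHelp.U_zpow_conj hqi hU n hf]
    exact SolHelp.M_ae (SolHelp.BM.comp hf (SolHelp.meas_shiftZ n)) ξ
  · intro n k ξ
    rw [hchar]
    exact SolHelp.M_ae (hb n k) ξ
  · intro B
    constructor
    · intro h
      obtain ⟨f, hf, hB⟩ := SolHelp.maxab (A := B) (fun f hf =>
        (h _ (fun n k => by
          rw [SolHelp.charOp' hqi hU hT]
          exact SolHelp.M_comm hf (hb _ k))).symm)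
      exact ⟨f, hf, fun ξ => by rw [hB]; exact SolHelp.M_ae hf ξ⟩
    · rintro ⟨f, hf, hB⟩ A hA
      obtain ⟨g, hg, hA'⟩ := hcomm A hA
      rw [hA', SolHelp.eq_M hf hB]
      exact SolHelp.M_comm hg hf
  · exact SolHelp.irred_iff hqi h3a
end

section
/- Let (ν₁, θ₁) and (ν₂, θ₂) be two pairs consisting of a σ-finite Borel measure on S_N quasi-invariant for the shift S and a measurable map S_N → 𝕋, with associated representations π_{ν₁,θ₁} and π_{ν₂,θ₂} of BS(1,N). These representations are unitarily equivalent if and only if ν₁ and ν₂ are mutually absolutely continuous and θ₁, θ₂ are cocycle equivalent, i.e., there exists a measurable function λ : S_N → 𝕋 such that λ·θ₁ = (λ∘S)·θ₂ ν₁-a.e. -/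
section Helpers

open MeasureTheory Real Complex Filter
open scoped ENNReal NNReal

/-- Finite measures on the circle are determined by their moments. -/
lemma circle_measure_ext (P Q : Measure Circle) [IsFiniteMeasure P] [IsFiniteMeasure Q]
    (h : ∀ k : ℕ, ∫ z, ((z : ℂ)) ^ k ∂P = ∫ z, ((z : ℂ)) ^ k ∂Q) : P = Q := by
  let c : BoundedContinuousFunction Circle ℂ :=
    BoundedContinuousFunction.mkOfCompact ⟨fun z => (z : ℂ), continuous_subtype_val⟩
  have hc : ∀ z, c z = (z : ℂ) := fun z => rfl
  refine ext_of_forall_mem_subalgebra_integral_eq_of_pseudoEMetric_complete_countable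
    (A := StarAlgebra.adjoin ℂ {c}) ?_ ?_
  · intro x y hxy
    refine ⟨c, ⟨c.toContinuousMap, ?_, rfl⟩, ?_⟩
    · exact ⟨c, StarAlgebra.subset_adjoin ℂ _ rfl, rfl⟩
    · intro hh
      exact hxy (Subtype.ext hh)
  · intro g hg
    have hg' : g ∈ Submodule.span ℂ
        (Submonoid.closure ({c} ∪ star {c}) : Set (BoundedContinuousFunction Circle ℂ)) := by
      rw [← StarAlgebra.adjoin_eq_span]; exact hg
    have hint : ∀ (f : BoundedContinuousFunction Circle ℂ) (R : Measure Circle)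
        [IsFiniteMeasure R], Integrable f R := fun f R _ => f.integrable R
    have hmon : ∀ f ∈ Submonoid.closure ({c} ∪ star {c}),
        ∃ k : ℤ, ∀ z : Circle, f z = ((z ^ k : Circle) : ℂ) := by
      intro f hf
      induction hf using Submonoid.closure_induction with
      | mem x hx =>
        rcases hx with hx | hx
        · rw [Set.mem_singleton_iff] at hx
          exact ⟨1, fun z => by rw [hx, hc]; simp⟩
        · rw [Set.mem_star, Set.mem_singleton_iff] at hx
          refine ⟨-1, fun z => ?_⟩
          have : x = star c := by rw [← hx, star_star]
          rw [this, BoundedContinuousFunction.star_apply, hc, zpow_neg_one, Circle.coe_inv_eq_conj]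
          rfl
      | one => exact ⟨0, fun z => by simp⟩
      | mul x y _ _ hx hy =>
        obtain ⟨k, hk⟩ := hx
        obtain ⟨l, hl⟩ := hy
        refine ⟨k + l, fun z => ?_⟩
        rw [BoundedContinuousFunction.mul_apply, hk, hl, zpow_add, Circle.coe_mul]
    induction hg' using Submodule.span_induction with
    | mem x hx =>
      obtain ⟨k, hk⟩ := hmon x hx
      simp only [hk]
      obtain ⟨n, rfl | rfl⟩ := k.eq_nat_or_neg
      · simpa using h n
      · have h2 := congrArg (starRingEnd ℂ) (h n)
        rw [← integral_conj, ← integral_conj] at h2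
        simpa [zpow_neg, ← Circle.coe_inv_eq_conj] using h2
    | zero => simp
    | add x y _ _ hx hy =>
      simp only [BoundedContinuousFunction.add_apply]
      rw [integral_add (hint x P) (hint y P), integral_add (hint x Q) (hint y Q)]
      rw [hx, hy]
      all_goals
        rw [StarSubalgebra.mem_toSubalgebra.symm, ← Subalgebra.mem_toSubmodule,
          StarAlgebra.adjoin_eq_span]
        assumption
    | smul a x _ hx =>
      simp only [BoundedContinuousFunction.coe_smul]
      rw [integral_smul, integral_smul, hx]
      rw [StarSubalgebra.mem_toSubalgebra.symm, ← Subalgebra.mem_toSubmodule,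
          StarAlgebra.adjoin_eq_span]
      assumption

lemma measurable_circle_coe : Measurable (fun z : Circle => (z : ℂ)) := by
  have h : Continuous (fun z : Circle => (z : ℂ)) := by fun_prop
  exact h.measurable

lemma measurable_coord (N : ℕ) (n : ℤ) : Measurable (fun z : Solenoid N => z.val n) :=
  (measurable_pi_apply n).comp measurable_subtype_coe

lemma coord_pow (N : ℕ) (z : Solenoid N) (n : ℤ) (k : ℕ) :
    z.val (n + k) ^ (N ^ k) = z.val n := by
  induction k with
  | zero => simp
  | succ k ih =>
    rw [pow_succ', pow_mul]
    have := z.property (n + k)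
    rw [Nat.cast_succ, ← add_assoc, this, ih]

/-- Finite measures on the solenoid are determined by moments of coordinates. -/
lemma solenoid_measure_ext (N : ℕ) (P Q : Measure (Solenoid N)) [IsFiniteMeasure P]
    [IsFiniteMeasure Q]
    (h : ∀ n k : ℕ, ∫ z, ((z.val (n : ℤ) : Circle) : ℂ) ^ k ∂P
      = ∫ z, ((z.val (n : ℤ) : Circle) : ℂ) ^ k ∂Q) : P = Q := by
  have hmap : ∀ n : ℕ, P.map (fun z => z.val (n : ℤ)) = Q.map (fun z => z.val (n : ℤ)) := by
    intro n
    apply circle_measure_ext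
    intro k
    have hm : Measurable (fun z : Circle => (z : ℂ) ^ k) :=
      measurable_circle_coe.pow_const k
    rw [integral_map (measurable_coord N n).aemeasurable hm.aestronglyMeasurable,
      integral_map (measurable_coord N n).aemeasurable hm.aestronglyMeasurable]
    exact h n k
  have hcyl : ∀ (n : ℕ) (B : Set Circle), MeasurableSet B →
      P ((fun z : Solenoid N => z.val (n : ℤ)) ⁻¹' B) =
      Q ((fun z : Solenoid N => z.val (n : ℤ)) ⁻¹' B) := by
    intro n B hB
    rw [← Measure.map_apply (measurable_coord N n) hB,
      ← Measure.map_apply (measurable_coord N n) hB, hmap]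
  -- lifting cylinders
  have lift : ∀ (m : ℤ) (B : Set Circle) (n : ℤ), MeasurableSet B → m ≤ n →
      ∃ B' : Set Circle, MeasurableSet B' ∧
        (fun z : Solenoid N => z.val m) ⁻¹' B = (fun z : Solenoid N => z.val n) ⁻¹' B' := by
    intro m B n hB hmn
    obtain ⟨k, rfl⟩ := Int.le.dest hmn
    refine ⟨(fun w => w ^ (N ^ k)) ⁻¹' B, (continuous_pow (N ^ k)).measurable hB, ?_⟩
    ext z
    simp only [Set.mem_preimage]
    rw [coord_pow]
  let C : Set (Set (Solenoid N)) :=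
    {s | ∃ (n : ℕ) (B : Set Circle), MeasurableSet B ∧
      s = (fun z : Solenoid N => z.val (n : ℤ)) ⁻¹' B}
  refine ext_of_generate_finite C ?_ ?_ ?_ ?_
  · apply le_antisymm
    · rintro s ⟨t, ht, rfl⟩
      have : Measurable[MeasurableSpace.generateFrom C]
          (fun z : Solenoid N => (z.val : ℤ → Circle)) := by
        refine @measurable_pi_lambda _ _ _ (MeasurableSpace.generateFrom C) _ _ ?_
        intro m B hB
        obtain ⟨B', hB', he⟩ := lift m B (m.toNat : ℤ) hB (Int.self_le_toNat m)
        rw [he]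
        exact MeasurableSpace.measurableSet_generateFrom ⟨_, B', hB', rfl⟩
      exact this ht
    · apply MeasurableSpace.generateFrom_le
      rintro s ⟨n, B, hB, rfl⟩
      exact measurable_coord N n hB
  · rintro s ⟨n, B, hB, rfl⟩ t ⟨m, B', hB', rfl⟩ _
    obtain ⟨D, hD, he⟩ := lift n B ((max n m : ℕ) : ℤ) hB (by simp)
    obtain ⟨D', hD', he'⟩ := lift m B' ((max n m : ℕ) : ℤ) hB' (by simp)
    rw [he, he']
    exact ⟨max n m, D ∩ D', hD.inter hD', by rw [Set.preimage_inter]⟩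
  · rintro s ⟨n, B, hB, rfl⟩
    exact hcyl n B hB
  · simpa using hcyl 0 Set.univ MeasurableSet.univ

lemma measurable_shift (N : ℕ) : Measurable (shift N) :=
  Measurable.subtype_mk (measurable_pi_lambda _ fun n => measurable_coord N (n - 1))

lemma measurable_shiftInv (N : ℕ) : Measurable (shiftInv N) :=
  Measurable.subtype_mk (measurable_pi_lambda _ fun n => measurable_coord N (n + 1))

/-- The inverse shift as a measurable equivalence. -/
def shiftInvEquiv (N : ℕ) : Solenoid N ≃ᵐ Solenoid N where
  toFun := shiftInv N
  invFun := shift N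
  left_inv := fun z => by
    apply Subtype.ext; funext n; simp [shift, shiftInv]
  right_inv := fun z => by
    apply Subtype.ext; funext n; simp [shift, shiftInv]
  measurable_toFun := measurable_shiftInv N
  measurable_invFun := measurable_shift N

lemma shiftInv_shift (N : ℕ) (z : Solenoid N) : shiftInv N (shift N z) = z :=
  (shiftInvEquiv N).right_inv z

lemma shift_shiftInv (N : ℕ) (z : Solenoid N) : shift N (shiftInv N z) = z :=
  (shiftInvEquiv N).left_inv z

instance sigmaFinite_measShift (N : ℕ) (ν : Measure (Solenoid N)) [SigmaFinite ν] :
    SigmaFinite (measShift N ν) :=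
  (shiftInvEquiv N).sigmaFinite_map

lemma shift_qmp (N : ℕ) (ν : Measure (Solenoid N)) (h : QuasiInvariant N ν) :
    Measure.QuasiMeasurePreserving (shift N) ν ν := by
  refine ⟨measurable_shift N, ?_⟩
  refine Measure.AbsolutelyContinuous.mk fun s hs h0 => ?_
  rw [Measure.map_apply (measurable_shift N) hs]
  apply h.2
  rw [measShift, Measure.map_apply (measurable_shiftInv N) (measurable_shift N hs)]
  rw [← Set.preimage_comp]
  have : shift N ∘ shiftInv N = id := funext (shift_shiftInv N)
  rw [this]; simpa using h0

lemma rnDeriv_shift (N : ℕ) (ν₁ ν₂ : Measure (Solenoid N)) [SigmaFinite ν₁] [SigmaFinite ν₂]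
    (hqi₁ : QuasiInvariant N ν₁) (hqi₂ : QuasiInvariant N ν₂) (h12 : ν₁ ≪ ν₂) :
    ∀ᵐ z ∂ν₂, (measShift N ν₁).rnDeriv ν₁ z * ν₁.rnDeriv ν₂ z =
      ν₁.rnDeriv ν₂ (shift N z) * (measShift N ν₂).rnDeriv ν₂ z := by
  have a := Measure.rnDeriv_mul_rnDeriv (κ := ν₂) hqi₁.1
  have hs : measShift N ν₁ ≪ measShift N ν₂ := h12.map (measurable_shiftInv N)
  have b := Measure.rnDeriv_mul_rnDeriv (κ := ν₂) hs
  have c := (shiftInvEquiv N).measurableEmbedding.rnDeriv_map ν₁ ν₂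
  have c' := (shift_qmp N ν₂ hqi₂).ae c
  filter_upwards [a, b, c'] with z ha hb hc
  simp only [Pi.mul_apply] at ha hb
  rw [ha, ← hb]
  congr 1
  have e : (shiftInvEquiv N) (shift N z) = z := shiftInv_shift N z
  rw [e] at hc
  exact hc


section Abstract

variable {α : Type*} [MeasurableSpace α]

lemma exists_mul_Lp (ν : Measure α) (g : α → Circle) (hg : Measurable g) (ξ : Lp ℂ 2 ν) :
    ∃ ξ' : Lp ℂ 2 ν, (ξ' : α → ℂ) =ᵐ[ν] fun z => (g z : ℂ) * ξ z := by
  have hm : MemLp (fun z => (g z : ℂ) * ξ z) 2 ν := by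
    refine (Lp.memLp ξ).congr_norm ?_ ?_
    · exact ((measurable_circle_coe.comp hg).aestronglyMeasurable).mul (Lp.aestronglyMeasurable ξ)
    · exact Eventually.of_forall fun z => by simp only [norm_mul, Circle.norm_coe, one_mul]
  exact ⟨hm.toLp _, hm.coeFn_toLp⟩

lemma lintegral_sq_lt_top (ν : Measure α) (ξ : Lp ℂ 2 ν) : ∫⁻ z, ‖ξ z‖ₑ ^ 2 ∂ν < ∞ := by
  have h := lintegral_rpow_enorm_lt_top_of_eLpNorm_lt_top (p := 2) (by norm_num) (by norm_num)
    (Lp.eLpNorm_lt_top ξ)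
  simpa using h

lemma measurable_sq (ν : Measure α) (ξ : Lp ℂ 2 ν) : Measurable fun z => ‖ξ z‖ₑ ^ 2 :=
  (Lp.stronglyMeasurable ξ).measurable.enorm.pow_const 2

lemma moment_eq (ν : Measure α) (ξ ξ' : Lp ℂ 2 ν) (g : α → ℂ)
    (h : (ξ' : α → ℂ) =ᵐ[ν] fun z => g z * ξ z) :
    ∫ z, g z ∂(ν.withDensity fun z => ‖ξ z‖ₑ ^ 2) = inner ℂ ξ ξ' := by
  rw [integral_withDensity_eq_integral_toReal_smul (measurable_sq ν ξ)
    (Eventually.of_forall fun z => by simp [lt_top_iff_ne_top]), L2.inner_def]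
  refine integral_congr_ae ?_
  filter_upwards [h] with z hz
  rw [hz]
  simp only [ENNReal.toReal_pow, toReal_enorm, real_smul, RCLike.inner_apply]
  rw [mul_assoc, Complex.mul_conj, Complex.normSq_eq_norm_sq]
  push_cast
  ring

lemma exists_pos_Lp (ν : Measure α) [SigmaFinite ν] :
    ∃ ξ : Lp ℂ 2 ν, ∀ᵐ z ∂ν, ∃ r : ℝ, 0 < r ∧ ξ z = (r : ℂ) := by
  obtain ⟨g, hpos, hg, hlt⟩ := exists_pos_lintegral_lt_of_sigmaFinite ν (ε := 1) one_ne_zero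
  have hmeas : Measurable fun z => ((Real.sqrt (g z) : ℝ) : ℂ) :=
    Complex.measurable_ofReal.comp (hg.coe_nnreal_real.sqrt)
  have hm : MemLp (fun z => ((Real.sqrt (g z) : ℝ) : ℂ)) 2 ν := by
    rw [memLp_two_iff_integrable_sq_norm hmeas.aestronglyMeasurable]
    have : (fun z => ‖((Real.sqrt (g z) : ℝ) : ℂ)‖ ^ 2) = fun z => ((g z : ℝ≥0) : ℝ) := by
      funext z
      rw [Complex.norm_real, Real.norm_eq_abs, sq_abs, Real.sq_sqrt (g z).coe_nonneg]
    rw [this]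
    refine ⟨hg.coe_nnreal_real.aestronglyMeasurable, ?_⟩
    rw [hasFiniteIntegral_iff_enorm]
    simp only [Real.enorm_eq_ofReal (NNReal.coe_nonneg _), ENNReal.ofReal_coe_nnreal]
    exact hlt.trans ENNReal.one_lt_top
  refine ⟨hm.toLp _, ?_⟩
  filter_upwards [hm.coeFn_toLp] with z hz
  exact ⟨_, Real.sqrt_pos.2 (NNReal.coe_pos.2 (hpos z)), hz⟩

lemma polarize (r : ℝ) (a b c d : ℂ) (h1 : r * ‖a‖ ^ 2 = ‖c‖ ^ 2) (h2 : r * ‖b‖ ^ 2 = ‖d‖ ^ 2)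
    (h3 : r * ‖a + b‖ ^ 2 = ‖c + d‖ ^ 2)
    (h4 : r * ‖a + Complex.I * b‖ ^ 2 = ‖c + Complex.I * d‖ ^ 2) :
    (r : ℂ) * ((starRingEnd ℂ) a * b) = (starRingEnd ℂ) c * d := by
  simp only [← Complex.normSq_eq_norm_sq, Complex.normSq_apply, Complex.add_re, Complex.add_im,
    Complex.mul_re, Complex.mul_im, Complex.I_re, Complex.I_im] at h1 h2 h3 h4
  apply Complex.ext <;> simp <;> nlinarith

lemma lintegral_weight (μ ν : Measure α) [SigmaFinite μ] [SigmaFinite ν] (h : μ ≪ ν)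
    (f : α → ℂ) (hf : AEStronglyMeasurable f ν) (l : α → Circle) :
    eLpNorm (fun z => (l z : ℂ) * (Real.sqrt (μ.rnDeriv ν z).toReal : ℂ) * f z) 2 ν
      = eLpNorm f 2 μ := by
  rw [eLpNorm_eq_lintegral_rpow_enorm_toReal (by norm_num) (by norm_num),
    eLpNorm_eq_lintegral_rpow_enorm_toReal (by norm_num) (by norm_num)]
  congr 1
  rw [← lintegral_rnDeriv_mul h (hf.enorm.pow_const _)]
  refine lintegral_congr_ae ?_
  filter_upwards [Measure.rnDeriv_lt_top μ ν] with z hz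
  have e : ‖(l z : ℂ)‖ₑ = 1 := by
    rw [← ofReal_norm, Circle.norm_coe, ENNReal.ofReal_one]
  have e2 : ‖((Real.sqrt (μ.rnDeriv ν z).toReal : ℝ) : ℂ)‖ₑ ^ 2 = μ.rnDeriv ν z := by
    rw [← ofReal_norm, Complex.norm_real, Real.norm_eq_abs,
      abs_of_nonneg (Real.sqrt_nonneg _), ← ENNReal.ofReal_pow (Real.sqrt_nonneg _),
      Real.sq_sqrt ENNReal.toReal_nonneg, ENNReal.ofReal_toReal hz.ne]
  simp only [enorm_mul, ENNReal.toReal_ofNat, ENNReal.rpow_two, e, one_mul, mul_pow, e2]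

lemma exists_weight_iso (μ ν : Measure α) [SigmaFinite μ] [SigmaFinite ν] (h : μ ≪ ν)
    (h' : ν ≪ μ) (l : α → Circle) (hl : Measurable l) :
    ∃ W : Lp ℂ 2 μ ≃ₗᵢ[ℂ] Lp ℂ 2 ν, ∀ ξ : Lp ℂ 2 μ, (W ξ : α → ℂ) =ᵐ[ν]
      fun z => (l z : ℂ) * (Real.sqrt (μ.rnDeriv ν z).toReal : ℂ) * ξ z := by
  have hw : Measurable fun z => (l z : ℂ) * (Real.sqrt (μ.rnDeriv ν z).toReal : ℂ) :=
    (measurable_circle_coe.comp hl).mul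
      (Complex.measurable_ofReal.comp (Measure.measurable_rnDeriv μ ν).ennreal_toReal.sqrt)
  have hmem : ∀ ξ : Lp ℂ 2 μ,
      MemLp (fun z => (l z : ℂ) * (Real.sqrt (μ.rnDeriv ν z).toReal : ℂ) * ξ z) 2 ν := by
    intro ξ
    have hξ : AEStronglyMeasurable ξ ν := (Lp.stronglyMeasurable ξ).aestronglyMeasurable
    refine ⟨hw.aestronglyMeasurable.mul hξ, ?_⟩
    rw [lintegral_weight μ ν h _ hξ]
    exact Lp.eLpNorm_lt_top ξ
  let V : Lp ℂ 2 μ →ₗᵢ[ℂ] Lp ℂ 2 ν :=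
    { toFun := fun ξ => (hmem ξ).toLp _
      map_add' := by
        intro ξ η
        apply Lp.ext
        filter_upwards [(hmem (ξ + η)).coeFn_toLp, (hmem ξ).coeFn_toLp, (hmem η).coeFn_toLp,
          Lp.coeFn_add ((hmem ξ).toLp _) ((hmem η).toLp _), h'.ae_le (Lp.coeFn_add ξ η)]
          with z h1 h2 h3 h4 h5
        rw [h1, h4, Pi.add_apply, h2, h3, h5, Pi.add_apply, mul_add]
      map_smul' := by
        intro c ξ
        apply Lp.ext
        filter_upwards [(hmem (c • ξ)).coeFn_toLp, (hmem ξ).coeFn_toLp,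
          Lp.coeFn_smul c ((hmem ξ).toLp _), h'.ae_le (Lp.coeFn_smul c ξ)] with z h1 h2 h3 h4
        rw [h1, RingHom.id_apply, h3, Pi.smul_apply, h2, h4, Pi.smul_apply, smul_eq_mul,
          smul_eq_mul]
        ring
      norm_map' := by
        intro ξ
        have hξ : AEStronglyMeasurable ξ ν := (Lp.stronglyMeasurable ξ).aestronglyMeasurable
        change ‖(hmem ξ).toLp _‖ = _
        rw [Lp.norm_toLp, lintegral_weight μ ν h _ hξ, Lp.norm_def] }
  have hV : ∀ ξ : Lp ℂ 2 μ, (V ξ : α → ℂ) =ᵐ[ν]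
      fun z => (l z : ℂ) * (Real.sqrt (μ.rnDeriv ν z).toReal : ℂ) * ξ z :=
    fun ξ => (hmem ξ).coeFn_toLp
  have hsurj : Function.Surjective V := by
    intro η
    have hηm : Measurable η := (Lp.stronglyMeasurable η).measurable
    let f : α → ℂ := fun z => ((l z : ℂ) * (Real.sqrt (μ.rnDeriv ν z).toReal : ℂ))⁻¹ * η z
    have hf : Measurable f := hw.inv.mul hηm
    have hne : ∀ᵐ z ∂ν, (l z : ℂ) * (Real.sqrt (μ.rnDeriv ν z).toReal : ℂ) * f z = η z := by
      filter_upwards [Measure.rnDeriv_pos' h', Measure.rnDeriv_lt_top μ ν] with z h1 h2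
      have : (l z : ℂ) * (Real.sqrt (μ.rnDeriv ν z).toReal : ℂ) ≠ 0 := by
        refine mul_ne_zero (Circle.coe_ne_zero _) ?_
        rw [Complex.ofReal_ne_zero]
        exact (Real.sqrt_pos.2 (ENNReal.toReal_pos h1.ne' h2.ne)).ne'
      exact mul_inv_cancel_left₀ this _
    have hfm : MemLp f 2 μ := by
      refine ⟨hf.aestronglyMeasurable, ?_⟩
      rw [← lintegral_weight μ ν h f hf.aestronglyMeasurable l, eLpNorm_congr_ae hne]
      exact Lp.eLpNorm_lt_top η
    refine ⟨hfm.toLp f, ?_⟩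
    apply Lp.ext
    filter_upwards [hV (hfm.toLp f), hne, h'.ae_le hfm.coeFn_toLp] with z h1 h2 h3
    rw [h1, h3, h2]
  exact ⟨LinearIsometryEquiv.ofSurjective V hsurj, hV⟩

end Abstract

section Intertwine

variable {N : ℕ} {ν₁ ν₂ : Measure (Solenoid N)} [SigmaFinite ν₁] [SigmaFinite ν₂]
  {θ₁ θ₂ : Solenoid N → Circle}
  {U₁ T₁ : unitary (Lp ℂ 2 ν₁ →L[ℂ] Lp ℂ 2 ν₁)}
  {U₂ T₂ : unitary (Lp ℂ 2 ν₂ →L[ℂ] Lp ℂ 2 ν₂)}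

lemma unitary_injective {H : Type*} [NormedAddCommGroup H] [InnerProductSpace ℂ H]
    [CompleteSpace H] (U : unitary (H →L[ℂ] H)) {x y : H}
    (h : (U : H →L[ℂ] H) x = (U : H →L[ℂ] H) y) : x = y := by
  have e := Unitary.coe_star_mul_self U
  have h2 := congrArg (fun v => (star (U : H →L[ℂ] H)) v) h
  have e2 : ∀ v, (star (U : H →L[ℂ] H)) ((U : H →L[ℂ] H) v) = v := by
    intro v
    have := congrArg (fun A : H →L[ℂ] H => A v) e
    exact this
  simpa only [e2] using h2

lemma intertwine_coord (hqi₁ : QuasiInvariant N ν₁) (hqi₂ : QuasiInvariant N ν₂)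
    (h₁ : IsPiNuTheta N ν₁ θ₁ U₁ T₁) (h₂ : IsPiNuTheta N ν₂ θ₂ U₂ T₂)
    (W : Lp ℂ 2 ν₁ ≃ₗᵢ[ℂ] Lp ℂ 2 ν₂)
    (hU : ∀ ξ : Lp ℂ 2 ν₁,
      W ((U₁ : Lp ℂ 2 ν₁ →L[ℂ] Lp ℂ 2 ν₁) ξ) = (U₂ : Lp ℂ 2 ν₂ →L[ℂ] Lp ℂ 2 ν₂) (W ξ))
    (hT : ∀ ξ : Lp ℂ 2 ν₁,
      W ((T₁ : Lp ℂ 2 ν₁ →L[ℂ] Lp ℂ 2 ν₁) ξ) = (T₂ : Lp ℂ 2 ν₂ →L[ℂ] Lp ℂ 2 ν₂) (W ξ))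
    (n : ℕ) : ∀ ξ ξ' : Lp ℂ 2 ν₁,
      ((ξ' : Solenoid N → ℂ) =ᵐ[ν₁] fun z => ((z.val (n : ℤ) : Circle) : ℂ) * ξ z) →
      (W ξ' : Solenoid N → ℂ) =ᵐ[ν₂] fun z => ((z.val (n : ℤ) : Circle) : ℂ) * W ξ z := by
  induction n with
  | zero =>
    intro ξ ξ' h
    have e : ξ' = (T₁ : Lp ℂ 2 ν₁ →L[ℂ] Lp ℂ 2 ν₁) ξ := by
      apply Lp.ext
      exact h.trans (h₁.2 ξ).symm
    rw [e, hT]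
    exact h₂.2 (W ξ)
  | succ n ih =>
    intro ξ ξ' h
    obtain ⟨η, hη⟩ := exists_mul_Lp ν₂ (fun z : Solenoid N => z.val ((n + 1 : ℕ) : ℤ))
      (measurable_coord N _) (W ξ)
    have hs : ∀ z : Solenoid N, (shift N z).val ((n + 1 : ℕ) : ℤ) = z.val (n : ℤ) := by
      intro z; simp [shift]
    have key : W ξ' = η := by
      apply unitary_injective U₂
      rw [← hU]
      apply Lp.ext
      have a : ((U₁ : Lp ℂ 2 ν₁ →L[ℂ] Lp ℂ 2 ν₁) ξ' : Solenoid N → ℂ) =ᵐ[ν₁]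
          fun z => ((z.val (n : ℤ) : Circle) : ℂ) *
            ((U₁ : Lp ℂ 2 ν₁ →L[ℂ] Lp ℂ 2 ν₁) ξ : Solenoid N → ℂ) z := by
        filter_upwards [h₁.1 ξ', h₁.1 ξ, (shift_qmp N ν₁ hqi₁).ae h] with z h1 h2 h3
        rw [h1, h2, h3, hs]
        ring
      have b := ih _ _ a
      rw [hU ξ] at b
      filter_upwards [b, h₂.1 (W ξ), h₂.1 η, (shift_qmp N ν₂ hqi₂).ae hη] with z h1 h2 h3 h4
      rw [h1, h2, h3, h4, hs]
      ring
    rw [key]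
    exact hη

lemma intertwine_pow (W : Lp ℂ 2 ν₁ ≃ₗᵢ[ℂ] Lp ℂ 2 ν₂) (n : ℕ)
    (hn : ∀ ξ ξ' : Lp ℂ 2 ν₁,
      ((ξ' : Solenoid N → ℂ) =ᵐ[ν₁] fun z => ((z.val (n : ℤ) : Circle) : ℂ) * ξ z) →
      (W ξ' : Solenoid N → ℂ) =ᵐ[ν₂] fun z => ((z.val (n : ℤ) : Circle) : ℂ) * W ξ z)
    (k : ℕ) : ∀ ξ : Lp ℂ 2 ν₁, ∃ ξ' : Lp ℂ 2 ν₁,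
      ((ξ' : Solenoid N → ℂ) =ᵐ[ν₁] fun z => ((z.val (n : ℤ) : Circle) : ℂ) ^ k * ξ z) ∧
      (W ξ' : Solenoid N → ℂ) =ᵐ[ν₂] fun z => ((z.val (n : ℤ) : Circle) : ℂ) ^ k * W ξ z := by
  induction k with
  | zero => intro ξ; exact ⟨ξ, by simp, by simp⟩
  | succ k ih =>
    intro ξ
    obtain ⟨ξ', h1, h2⟩ := ih ξ
    obtain ⟨ξ'', h3⟩ := exists_mul_Lp ν₁ (fun z : Solenoid N => z.val (n : ℤ))
      (measurable_coord N _) ξ'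
    refine ⟨ξ'', ?_, ?_⟩
    · filter_upwards [h1, h3] with z h1 h3
      rw [h3, h1]; ring
    · filter_upwards [h2, hn _ _ h3] with z h1 h3
      rw [h3, h1]; ring

lemma density_eq (W : Lp ℂ 2 ν₁ ≃ₗᵢ[ℂ] Lp ℂ 2 ν₂)
    (hn : ∀ n : ℕ, ∀ ξ ξ' : Lp ℂ 2 ν₁,
      ((ξ' : Solenoid N → ℂ) =ᵐ[ν₁] fun z => ((z.val (n : ℤ) : Circle) : ℂ) * ξ z) →
      (W ξ' : Solenoid N → ℂ) =ᵐ[ν₂] fun z => ((z.val (n : ℤ) : Circle) : ℂ) * W ξ z)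
    (ξ : Lp ℂ 2 ν₁) :
    ν₁.withDensity (fun z => ‖ξ z‖ₑ ^ 2) = ν₂.withDensity (fun z => ‖W ξ z‖ₑ ^ 2) := by
  haveI : IsFiniteMeasure (ν₁.withDensity (fun z => ‖ξ z‖ₑ ^ 2)) :=
    isFiniteMeasure_withDensity (lintegral_sq_lt_top ν₁ ξ).ne
  haveI : IsFiniteMeasure (ν₂.withDensity (fun z => ‖W ξ z‖ₑ ^ 2)) :=
    isFiniteMeasure_withDensity (lintegral_sq_lt_top ν₂ (W ξ)).ne
  apply solenoid_measure_ext
  intro n k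
  obtain ⟨ξ', h1, h2⟩ := intertwine_pow W n (hn n) k ξ
  rw [moment_eq ν₁ ξ ξ' _ h1, moment_eq ν₂ (W ξ) (W ξ') _ h2, W.inner_map_map]

lemma ac_of_pos (ν : Measure (Solenoid N)) (ξ : Lp ℂ 2 ν)
    (h : ∀ᵐ z ∂ν, ∃ r : ℝ, 0 < r ∧ ξ z = (r : ℂ)) :
    ν ≪ ν.withDensity (fun z => ‖ξ z‖ₑ ^ 2) := by
  refine withDensity_absolutelyContinuous' (measurable_sq ν ξ).aemeasurable ?_
  filter_upwards [h] with z ⟨r, hr, hz⟩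
  rw [hz]
  simp [hr.ne']

lemma phase_eq (a b : ℝ) (ha : 0 < a) (hb : 0 ≤ b) (u v : Circle)
    (h : (a : ℂ) * (u : ℂ) = (b : ℂ) * (v : ℂ)) : u = v := by
  have hn := congrArg norm h
  simp only [norm_mul, Circle.norm_coe, mul_one, Complex.norm_real, Real.norm_eq_abs,
    abs_of_pos ha, abs_of_nonneg hb] at hn
  subst hn
  exact Circle.ext (mul_left_cancel₀ (Complex.ofReal_ne_zero.2 ha.ne') h)

lemma forward_dir (hqi₁ : QuasiInvariant N ν₁) (hqi₂ : QuasiInvariant N ν₂)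
    (h₁ : IsPiNuTheta N ν₁ θ₁ U₁ T₁) (h₂ : IsPiNuTheta N ν₂ θ₂ U₂ T₂)
    (W : Lp ℂ 2 ν₁ ≃ₗᵢ[ℂ] Lp ℂ 2 ν₂)
    (hU : ∀ ξ : Lp ℂ 2 ν₁,
      W ((U₁ : Lp ℂ 2 ν₁ →L[ℂ] Lp ℂ 2 ν₁) ξ) = (U₂ : Lp ℂ 2 ν₂ →L[ℂ] Lp ℂ 2 ν₂) (W ξ))
    (hT : ∀ ξ : Lp ℂ 2 ν₁,
      W ((T₁ : Lp ℂ 2 ν₁ →L[ℂ] Lp ℂ 2 ν₁) ξ) = (T₂ : Lp ℂ 2 ν₂ →L[ℂ] Lp ℂ 2 ν₂) (W ξ)) :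
    (ν₁ ≪ ν₂ ∧ ν₂ ≪ ν₁) ∧
      ∃ lam : Solenoid N → Circle, Measurable lam ∧
        (fun z => ((lam z : Circle) : ℂ) * ((θ₁ z : Circle) : ℂ)) =ᵐ[ν₁]
          fun z => ((lam (shift N z) : Circle) : ℂ) * ((θ₂ z : Circle) : ℂ) := by
  have hd := density_eq W (intertwine_coord hqi₁ hqi₂ h₁ h₂ W hU hT)
  obtain ⟨ξ₀, hξ₀⟩ := exists_pos_Lp ν₁
  obtain ⟨η₀, hη₀⟩ := exists_pos_Lp ν₂
  have h12 : ν₁ ≪ ν₂ := by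
    have := ac_of_pos ν₁ ξ₀ hξ₀
    rw [hd] at this
    exact this.trans (withDensity_absolutelyContinuous _ _)
  have h21 : ν₂ ≪ ν₁ := by
    have := ac_of_pos ν₂ η₀ hη₀
    have e := hd (W.symm η₀)
    rw [W.apply_symm_apply] at e
    rw [← e] at this
    exact this.trans (withDensity_absolutelyContinuous _ _)
  refine ⟨⟨h12, h21⟩, ?_⟩
  -- pointwise identity of densities
  have hsq : ∀ ξ : Lp ℂ 2 ν₁, ∀ᵐ z ∂ν₂,
      (ν₁.rnDeriv ν₂ z).toReal * ‖ξ z‖ ^ 2 = ‖W ξ z‖ ^ 2 := by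
    intro ξ
    have e := hd ξ
    nth_rewrite 1 [← Measure.withDensity_rnDeriv_eq ν₁ ν₂ h12] at e
    rw [← withDensity_mul _ (Measure.measurable_rnDeriv ν₁ ν₂) (measurable_sq ν₁ ξ),
      withDensity_eq_iff_of_sigmaFinite
        ((Measure.measurable_rnDeriv ν₁ ν₂).mul (measurable_sq ν₁ ξ)).aemeasurable
        (measurable_sq ν₂ (W ξ)).aemeasurable] at e
    filter_upwards [e] with z hz
    have := congrArg ENNReal.toReal hz
    simpa using this
  have hpol : ∀ ξ ξ' : Lp ℂ 2 ν₁, ∀ᵐ z ∂ν₂,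
      ((ν₁.rnDeriv ν₂ z).toReal : ℂ) * ((starRingEnd ℂ) (ξ z) * ξ' z)
        = (starRingEnd ℂ) (W ξ z) * W ξ' z := by
    intro ξ ξ'
    have e3 := hsq (ξ + ξ')
    have e4 := hsq (ξ + Complex.I • ξ')
    rw [map_add] at e3
    rw [map_add, map_smul] at e4
    filter_upwards [hsq ξ, hsq ξ', e3, e4, h21.ae_le (Lp.coeFn_add ξ ξ'),
      h21.ae_le (Lp.coeFn_add ξ (Complex.I • ξ')), h21.ae_le (Lp.coeFn_smul Complex.I ξ'),
      Lp.coeFn_add (W ξ) (W ξ'), Lp.coeFn_add (W ξ) (Complex.I • W ξ'),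
      Lp.coeFn_smul Complex.I (W ξ')] with z a1 a2 a3 a4 b1 b2 b3 c1 c2 c3
    rw [b1, c1] at a3
    rw [b2, c2, Pi.add_apply, Pi.add_apply, b3, c3] at a4
    exact polarize _ _ _ _ _ a1 a2 a3 a4
  let lam : Solenoid N → Circle := fun z => Circle.exp (Complex.arg (W ξ₀ z))
  have hlam : Measurable lam := by
    have hexp : Measurable (Circle.exp : ℝ → Circle) := Circle.exp.continuous.measurable
    exact hexp.comp (Complex.measurable_arg.comp (Lp.stronglyMeasurable (W ξ₀)).measurable)
  have hlam2 : ∀ z, W ξ₀ z = (‖W ξ₀ z‖ : ℂ) * (lam z : ℂ) := by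
    intro z
    simp only [lam, Circle.coe_exp]
    exact (Complex.norm_mul_exp_arg_mul_I _).symm
  refine ⟨lam, hlam, ?_⟩
  have hp := hpol ξ₀ ((U₁ : Lp ℂ 2 ν₁ →L[ℂ] Lp ℂ 2 ν₁) ξ₀)
  rw [hU] at hp
  filter_upwards [h12.ae_le hp, hξ₀, (shift_qmp N ν₁ hqi₁).ae hξ₀, h₁.1 ξ₀,
    h12.ae_le (h₂.1 (W ξ₀)), Measure.rnDeriv_pos' hqi₁.2,
    Measure.rnDeriv_lt_top (measShift N ν₁) ν₁, Measure.rnDeriv_pos h12,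
    h12.ae_le (Measure.rnDeriv_lt_top ν₁ ν₂)] with z a1 ⟨r, hr, hrz⟩ ⟨s, hs, hsz⟩ a4 a5 a6 a7 a8 a9
  rw [a4, a5, hrz, hsz, hlam2 z, hlam2 (shift N z), Complex.conj_ofReal, map_mul,
    Complex.conj_ofReal, ← Circle.coe_inv_eq_conj] at a1
  have ph := phase_eq
    ((ν₁.rnDeriv ν₂ z).toReal * (r * (Real.sqrt ((measShift N ν₁).rnDeriv ν₁ z).toReal * s)))
    (‖W ξ₀ z‖ * (Real.sqrt ((measShift N ν₂).rnDeriv ν₂ z).toReal * ‖W ξ₀ (shift N z)‖))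
    (by
      have q1 := ENNReal.toReal_pos a8.ne' a9.ne
      have q2 := Real.sqrt_pos.2 (ENNReal.toReal_pos a6.ne' a7.ne)
      positivity)
    (by positivity) (θ₁ z) ((lam z)⁻¹ * (θ₂ z * lam (shift N z)))
    (by
      simp only [Circle.coe_mul, Complex.ofReal_mul]
      linear_combination a1)
  rw [ph, ← Circle.coe_mul, mul_inv_cancel_left, ← Circle.coe_mul, mul_comm]

lemma backward_dir (hqi₁ : QuasiInvariant N ν₁) (hqi₂ : QuasiInvariant N ν₂)
    (h₁ : IsPiNuTheta N ν₁ θ₁ U₁ T₁) (h₂ : IsPiNuTheta N ν₂ θ₂ U₂ T₂)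
    (h12 : ν₁ ≪ ν₂) (h21 : ν₂ ≪ ν₁) (lam : Solenoid N → Circle) (hlam : Measurable lam)
    (hc : (fun z => ((lam z : Circle) : ℂ) * ((θ₁ z : Circle) : ℂ)) =ᵐ[ν₁]
          fun z => ((lam (shift N z) : Circle) : ℂ) * ((θ₂ z : Circle) : ℂ)) :
    ∃ W : Lp ℂ 2 ν₁ ≃ₗᵢ[ℂ] Lp ℂ 2 ν₂,
      (∀ ξ : Lp ℂ 2 ν₁,
        W ((U₁ : Lp ℂ 2 ν₁ →L[ℂ] Lp ℂ 2 ν₁) ξ) = (U₂ : Lp ℂ 2 ν₂ →L[ℂ] Lp ℂ 2 ν₂) (W ξ)) ∧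
      (∀ ξ : Lp ℂ 2 ν₁,
        W ((T₁ : Lp ℂ 2 ν₁ →L[ℂ] Lp ℂ 2 ν₁) ξ) = (T₂ : Lp ℂ 2 ν₂ →L[ℂ] Lp ℂ 2 ν₂) (W ξ)) := by
  obtain ⟨W, hW⟩ := exists_weight_iso ν₁ ν₂ h12 h21 lam hlam
  refine ⟨W, fun ξ => ?_, fun ξ => ?_⟩
  · apply Lp.ext
    filter_upwards [hW ((U₁ : Lp ℂ 2 ν₁ →L[ℂ] Lp ℂ 2 ν₁) ξ), h₂.1 (W ξ), h21.ae_le (h₁.1 ξ),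
      (shift_qmp N ν₂ hqi₂).ae (hW ξ), h21.ae_le hc, rnDeriv_shift N ν₁ ν₂ hqi₁ hqi₂ h12]
      with z a1 a2 a3 a4 a5 a6
    rw [a1, a2, a3, a4]
    have e := congrArg (fun x => Real.sqrt (ENNReal.toReal x)) a6
    simp only [ENNReal.toReal_mul] at e
    rw [Real.sqrt_mul ENNReal.toReal_nonneg, Real.sqrt_mul ENNReal.toReal_nonneg] at e
    have e' := congrArg (fun x : ℝ => (x : ℂ)) e
    simp only [Complex.ofReal_mul] at e'
    linear_combination
      ((Real.sqrt (ν₁.rnDeriv ν₂ z).toReal : ℂ) *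
        (Real.sqrt ((measShift N ν₁).rnDeriv ν₁ z).toReal : ℂ) * ξ (shift N z)) * a5 +
      ((lam (shift N z) : ℂ) * (θ₂ z : ℂ) * ξ (shift N z)) * e'
  · apply Lp.ext
    filter_upwards [hW ((T₁ : Lp ℂ 2 ν₁ →L[ℂ] Lp ℂ 2 ν₁) ξ), h₂.2 (W ξ), h21.ae_le (h₁.2 ξ),
      hW ξ] with z a1 a2 a3 a4
    rw [a1, a2, a3, a4]
    ring

end Intertwine

end Helpers


open MeasureTheory Real Complex Filter Finset in
/-- Proposition 2.3. Two representations `π_{ν₁,θ₁}` and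
`π_{ν₂,θ₂}` are unitarily equivalent if and only if `ν₁` and `ν₂` are mutually
absolutely continuous and `θ₁`, `θ₂` are cocycle equivalent:
`λ·θ₁ = (λ∘S)·θ₂` `ν₁`-a.e. for some measurable `λ : S_N → 𝕋`. -/
theorem statement_3 (N : ℕ) (hN : 2 ≤ N)
    (ν₁ ν₂ : Measure (Solenoid N)) [SigmaFinite ν₁] [SigmaFinite ν₂]
    (hqi₁ : QuasiInvariant N ν₁) (hqi₂ : QuasiInvariant N ν₂)
    (θ₁ θ₂ : Solenoid N → Circle) (hθ₁ : Measurable θ₁) (hθ₂ : Measurable θ₂)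
    (U₁ T₁ : unitary (Lp ℂ 2 ν₁ →L[ℂ] Lp ℂ 2 ν₁))
    (U₂ T₂ : unitary (Lp ℂ 2 ν₂ →L[ℂ] Lp ℂ 2 ν₂))
    (h₁ : IsPiNuTheta N ν₁ θ₁ U₁ T₁) (h₂ : IsPiNuTheta N ν₂ θ₂ U₂ T₂) :
    (∃ W : Lp ℂ 2 ν₁ ≃ₗᵢ[ℂ] Lp ℂ 2 ν₂,
      (∀ ξ : Lp ℂ 2 ν₁,
        W ((U₁ : Lp ℂ 2 ν₁ →L[ℂ] Lp ℂ 2 ν₁) ξ) = (U₂ : Lp ℂ 2 ν₂ →L[ℂ] Lp ℂ 2 ν₂) (W ξ)) ∧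
      (∀ ξ : Lp ℂ 2 ν₁,
        W ((T₁ : Lp ℂ 2 ν₁ →L[ℂ] Lp ℂ 2 ν₁) ξ) = (T₂ : Lp ℂ 2 ν₂ →L[ℂ] Lp ℂ 2 ν₂) (W ξ))) ↔
    ((ν₁ ≪ ν₂ ∧ ν₂ ≪ ν₁) ∧
      ∃ lam : Solenoid N → Circle, Measurable lam ∧
        (fun z => ((lam z : Circle) : ℂ) * ((θ₁ z : Circle) : ℂ)) =ᵐ[ν₁]
          fun z => ((lam (shift N z) : Circle) : ℂ) * ((θ₂ z : Circle) : ℂ)) := by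

  constructor
  · rintro ⟨W, hU, hT⟩
    exact forward_dir hqi₁ hqi₂ h₁ h₂ W hU hT
  · rintro ⟨⟨h12, h21⟩, lam, hlam, hc⟩
    exact backward_dir hqi₁ hqi₂ h₁ h₂ h12 h21 lam hlam hc
end

section
/- The Haar measure μ_{S_N} of the solenoid S_N is invariant under the shift S, and S is ergodic with respect to μ_{S_N}; consequently, the representation π_{μ_{S_N},1} of BS(1,N) (with θ ≡ 1) on L²(μ_{S_N}) is irreducible. -/
noncomputable section

open MeasureTheory Real Complex Filter Finset
open scoped ENNReal

/-! ### Auxiliary results -/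

namespace SolAux

open MeasureTheory Measure

theorem isClosed_solenoid (N : ℕ) : IsClosed (solenoidGroup N : Set (ℤ → Circle)) := by
  have h : (solenoidGroup N : Set (ℤ → Circle)) = ⋂ n : ℤ, {z | z (n + 1) ^ N = z n} := by
    ext z
    simp only [Set.mem_iInter]
    exact Iff.rfl
  rw [h]
  refine isClosed_iInter fun n => isClosed_eq ?_ ?_ <;> fun_prop

instance (N : ℕ) : CompactSpace (Solenoid N) :=
  isCompact_iff_compactSpace.mp (isClosed_solenoid N).isCompact

theorem shift_shiftInv (N : ℕ) (z : Solenoid N) : shift N (shiftInv N z) = z := by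
  apply Subtype.ext; funext n; simp [shift, shiftInv]

theorem shiftInv_shift (N : ℕ) (z : Solenoid N) : shiftInv N (shift N z) = z := by
  apply Subtype.ext; funext n; simp [shift, shiftInv]

theorem continuous_shift (N : ℕ) : Continuous (shift N) := by
  unfold shift
  refine Continuous.subtype_mk ?_ _
  exact continuous_pi fun n => (continuous_apply (n - 1)).comp continuous_subtype_val

theorem continuous_shiftInv (N : ℕ) : Continuous (shiftInv N) := by
  unfold shiftInv
  refine Continuous.subtype_mk ?_ _
  exact continuous_pi fun n => (continuous_apply (n + 1)).comp continuous_subtype_val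

/-- The shift inverse as a continuous group automorphism. -/
def shiftInvEquiv (N : ℕ) : Solenoid N ≃ₜ* Solenoid N where
  toFun := shiftInv N
  invFun := shift N
  left_inv := shift_shiftInv N
  right_inv := shiftInv_shift N
  map_mul' _ _ := rfl
  continuous_toFun := continuous_shiftInv N
  continuous_invFun := continuous_shift N

theorem isHaar (N : ℕ) (μ : Measure (Solenoid N)) [IsProbabilityMeasure μ]
    (h : ∀ g : Solenoid N, μ.map (fun z => g * z) = μ) : IsHaarMeasure μ := by
  have : IsMulLeftInvariant μ := ⟨h⟩
  exact isHaarMeasure_of_isCompact_nonempty_interior μ Set.univ isCompact_univ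
    (by simp) (by simp) (by simp)

theorem invariant (N : ℕ) (μ : Measure (Solenoid N)) [IsProbabilityMeasure μ]
    (h : ∀ g : Solenoid N, μ.map (fun z => g * z) = μ) : measShift N μ = μ := by
  have := isHaar N μ h
  have : IsHaarMeasure (μ.map (shiftInvEquiv N)) := (shiftInvEquiv N).isHaarMeasure_map μ
  have : IsProbabilityMeasure (μ.map (shiftInvEquiv N)) :=
    isProbabilityMeasure_map (continuous_shiftInv N).measurable.aemeasurable
  exact isHaarMeasure_eq_of_isProbabilityMeasure (μ.map (shiftInvEquiv N)) μ

theorem mp_shift (N : ℕ) (μ : Measure (Solenoid N))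
    (h : measShift N μ = μ) : MeasurePreserving (shift N) μ μ := by
  refine ⟨(continuous_shift N).measurable, ?_⟩
  conv_lhs => rw [← h]
  rw [measShift, Measure.map_map (continuous_shift N).measurable
    (continuous_shiftInv N).measurable]
  have : shift N ∘ shiftInv N = id := funext (shift_shiftInv N)
  rw [this, Measure.map_id]

theorem me_shift (N : ℕ) : MeasurableEmbedding (shift N) :=
  (shiftInvEquiv N).symm.toHomeomorph.measurableEmbedding

/-- The characters `z ↦ z_n ^ k`. -/
def chi (N : ℕ) (n k : ℤ) : C(Solenoid N, ℂ) where
  toFun z := ((z.val n ^ k : Circle) : ℂ)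
  continuous_toFun := by
    have : Continuous fun z : Solenoid N => z.val n :=
      (continuous_apply n).comp continuous_subtype_val
    exact continuous_subtype_val.comp (this.zpow k)

theorem chi_apply (N : ℕ) (n k : ℤ) (z : Solenoid N) :
    chi N n k z = ((z.val n ^ k : Circle) : ℂ) := rfl

theorem chi_shift (N : ℕ) (n k : ℤ) (z : Solenoid N) :
    chi N n k (shift N z) = chi N (n - 1) k z := rfl

theorem chi_lift1 (N : ℕ) (n k : ℤ) : chi N n k = chi N (n + 1) (N * k) := by
  ext z
  rw [chi_apply, chi_apply, zpow_mul, zpow_natCast, z.property n]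

theorem chi_lift (N : ℕ) (n k : ℤ) (j : ℕ) : chi N n k = chi N (n + j) (N ^ j * k) := by
  induction j with
  | zero => simp
  | succ j ih => rw [ih, chi_lift1]; congr 1 <;> push_cast <;> ring

theorem chi_zero (N : ℕ) (n : ℤ) : chi N n 0 = 1 := by
  ext z; simp [chi_apply]

theorem chi_mul (N : ℕ) (n k l : ℤ) : chi N n k * chi N n l = chi N n (k + l) := by
  ext z; simp [chi_apply, zpow_add]

theorem chi_star (N : ℕ) (n k : ℤ) : star (chi N n k) = chi N n (-k) := by
  ext z
  rw [ContinuousMap.star_apply, chi_apply, chi_apply, zpow_neg, Circle.coe_inv_eq_conj]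
  rfl

/-- All characters. -/
def chars (N : ℕ) : Set C(Solenoid N, ℂ) := Set.range fun p : ℤ × ℤ => chi N p.1 p.2

/-- The algebra of trigonometric polynomials. -/
def charAlg (N : ℕ) : StarSubalgebra ℂ C(Solenoid N, ℂ) where
  toSubalgebra := Algebra.adjoin ℂ (chars N)
  star_mem' := by
    change Algebra.adjoin ℂ (chars N) ≤ star (Algebra.adjoin ℂ (chars N))
    refine Algebra.adjoin_le ?_
    rintro - ⟨⟨n, k⟩, rfl⟩
    exact Algebra.subset_adjoin ⟨(n, -k), (chi_star N n k).symm⟩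

theorem charAlg_coe (N : ℕ) :
    Subalgebra.toSubmodule (charAlg N).toSubalgebra = Submodule.span ℂ (chars N) := by
  apply Algebra.adjoin_eq_span_of_subset
  refine Set.Subset.trans ?_ Submodule.subset_span
  intro x hx
  refine Submonoid.closure_induction (fun _ => fun h _ => h) ?_ ?_ hx hx
  · intro _; exact ⟨(0, 0), chi_zero N 0⟩
  · intro x y hx hy ihx ihy _
    obtain ⟨⟨n, k⟩, rfl⟩ := ihx hx
    obtain ⟨⟨m, l⟩, rfl⟩ := ihy hy
    rcases le_total n m with h | h
    · obtain ⟨j, rfl⟩ := Int.le.dest h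
      exact ⟨(n + j, N ^ j * k + l), by
        dsimp only; rw [chi_lift N n k j, chi_mul]⟩
    · obtain ⟨j, rfl⟩ := Int.le.dest h
      exact ⟨(m + j, k + N ^ j * l), by
        dsimp only; rw [chi_lift N m l j, chi_mul]⟩

theorem charAlg_sep (N : ℕ) : (charAlg N).SeparatesPoints := by
  intro x y hxy
  have : ∃ n, x.val n ≠ y.val n := by
    by_contra! h
    exact hxy (Subtype.ext (funext h))
  obtain ⟨n, hn⟩ := this
  refine ⟨_, ⟨chi N n 1, Algebra.subset_adjoin ⟨(n, 1), rfl⟩, rfl⟩, ?_⟩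
  intro h
  apply hn
  have h' : ((x.val n : Circle) : ℂ) = ((y.val n : Circle) : ℂ) := by
    simpa [chi_apply] using h
  exact Circle.ext h'

theorem span_dense (N : ℕ) : (Submodule.span ℂ (chars N)).topologicalClosure = ⊤ := by
  rw [← charAlg_coe]
  exact congr_arg (fun A : StarSubalgebra ℂ C(Solenoid N, ℂ) =>
      Subalgebra.toSubmodule A.toSubalgebra)
    (ContinuousMap.starSubalgebra_topologicalClosure_eq_top_of_separatesPoints _ (charAlg_sep N))

section L2

variable (N : ℕ) (μ : Measure (Solenoid N)) [IsProbabilityMeasure μ]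

/-- Characters as elements of `L²`. -/
def e (n k : ℤ) : Lp ℂ 2 μ := ContinuousMap.toLp (E := ℂ) 2 μ ℂ (chi N n k)

theorem e_coe (n k : ℤ) : (e N μ n k : Solenoid N → ℂ) =ᵐ[μ] chi N n k :=
  ContinuousMap.coeFn_toLp μ (chi N n k)

theorem e_span : (Submodule.span ℂ
    (Set.range fun p : ℤ × ℤ => e N μ p.1 p.2)).topologicalClosure = ⊤ := by
  have : TopologicalSpace.PseudoMetrizableSpace (ℤ → Circle) := inferInstance
  have : TopologicalSpace.PseudoMetrizableSpace (Solenoid N) :=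
    Topology.IsInducing.subtypeVal.pseudoMetrizableSpace
  have : μ.WeaklyRegular := inferInstance
  convert! (ContinuousMap.toLp_denseRange ℂ μ ℂ
    (p := 2) (by simp)).topologicalClosure_map_submodule (span_dense N)
  rw [Submodule.map_span, chars, ← Set.range_comp]
  rfl

theorem e_zero (n : ℤ) : e N μ n 0 = e N μ 0 0 := by
  simp only [e, chi_zero]

/-- An element of the solenoid on which a given nontrivial character is `-1`. -/
theorem exists_elt (hN : 2 ≤ N) (n k : ℤ) (hk : k ≠ 0) :
    ∃ g : Solenoid N, chi N n k g = -1 := by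
  have hN0 : (N : ℝ) ≠ 0 := by positivity
  have hk' : (k : ℝ) ≠ 0 := by exact_mod_cast hk
  refine ⟨⟨fun j => Circle.exp (Real.pi / k * (N : ℝ) ^ (n - j)), ?_⟩, ?_⟩
  · intro j
    simp only
    rw [← Circle.exp_nsmul]
    congr 1
    rw [nsmul_eq_mul, show n - j = (n - (j + 1)) + 1 by ring, zpow_add_one₀ hN0]
    ring
  · rw [chi_apply]
    simp only [sub_self, zpow_zero, mul_one]
    rw [← Circle.exp_zsmul]
    simp only [zsmul_eq_mul]
    rw [mul_div_cancel₀ _ hk']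
    simp [Circle.coe_exp]

theorem integral_chi (hN : 2 ≤ N) (h : ∀ g : Solenoid N, μ.map (fun z => g * z) = μ)
    (n k : ℤ) (hk : k ≠ 0) : ∫ z, chi N n k z ∂μ = 0 := by
  obtain ⟨g, hg⟩ := exists_elt N hN n k hk
  have : IsMulLeftInvariant μ := ⟨h⟩
  have h1 : ∫ z, chi N n k (g * z) ∂μ = ∫ z, chi N n k z ∂μ :=
    integral_mul_left_eq_self _ g
  have h2 : ∀ z, chi N n k (g * z) = - chi N n k z := by
    intro z
    have : chi N n k (g * z) = chi N n k g * chi N n k z := by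
      simp [chi_apply, mul_zpow]
    rw [this, hg]; ring
  simp only [h2, integral_neg] at h1
  linear_combination (-1/2 : ℂ) * h1

theorem inner_e (f : Lp ℂ 2 μ) (n k : ℤ) :
    inner ℂ (e N μ n k) f = ∫ z, chi N n (-k) z * f z ∂μ := by
  rw [L2.inner_def]
  refine integral_congr_ae ?_
  filter_upwards [e_coe N μ n k] with z hz
  rw [hz, ← chi_star, RCLike.inner_apply, mul_comm]
  rfl

theorem inner_e_e (n k l : ℤ) :
    inner ℂ (e N μ n k) (e N μ n l) = ∫ z, chi N n (l - k) z ∂μ := by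
  rw [inner_e]
  refine integral_congr_ae ?_
  filter_upwards [e_coe N μ n l] with z hz
  rw [hz, ← ContinuousMap.mul_apply, chi_mul]
  congr 2; ring

theorem inner_e_self (n k : ℤ) : inner ℂ (e N μ n k) (e N μ n k) = 1 := by
  rw [inner_e_e, sub_self, chi_zero]; simp

theorem inner_e_ne (hN : 2 ≤ N) (h : ∀ g : Solenoid N, μ.map (fun z => g * z) = μ)
    (n k l : ℤ) (hkl : k ≠ l) : inner ℂ (e N μ n k) (e N μ n l) = 0 := by
  rw [inner_e_e, integral_chi N μ hN h]
  exact sub_ne_zero.mpr hkl.symm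

theorem coeff_shift (h : measShift N μ = μ) (f : Lp ℂ 2 μ)
    (hf : (fun z => (f : Solenoid N → ℂ) (shift N z)) =ᵐ[μ] f) (n k : ℤ) :
    inner ℂ (e N μ n (N * k)) f = inner ℂ (e N μ n k) f := by
  rw [inner_e, inner_e, ← (mp_shift N μ h).integral_comp (me_shift N)
    (fun z => chi N n (-k) z * f z)]
  refine integral_congr_ae ?_
  filter_upwards [hf] with z hz
  rw [hz, chi_shift, chi_lift1 N (n - 1)]
  congr 3 <;> ring_nf

theorem coeff_zero (hN : 2 ≤ N) (h : ∀ g : Solenoid N, μ.map (fun z => g * z) = μ)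
    (f : Lp ℂ 2 μ)
    (hf : (fun z => (f : Solenoid N → ℂ) (shift N z)) =ᵐ[μ] f) (n k : ℤ) (hk : k ≠ 0) :
    inner ℂ (e N μ n k) f = 0 := by
  have hc : ∀ j : ℕ, inner ℂ (e N μ n (N ^ j * k)) f = inner ℂ (e N μ n k) f := by
    intro j
    induction j with
    | zero => simp
    | succ j ih =>
      rw [← ih, ← coeff_shift N μ (invariant N μ h) f hf n (N ^ j * k), pow_succ']
      congr 2; ring
  have hinj : Function.Injective fun j : ℕ => (N : ℤ) ^ j * k := by
    intro a b hab
    have h1 : (N : ℤ) ^ a = (N : ℤ) ^ b := mul_right_cancel₀ hk hab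
    exact Nat.pow_right_injective hN (by exact_mod_cast h1)
  have ho : Orthonormal ℂ fun j : ℕ => e N μ n (N ^ j * k) := by
    rw [orthonormal_iff_ite]
    intro a b
    split_ifs with hab
    · subst hab; exact inner_e_self N μ _ _
    · exact inner_e_ne N μ hN h _ _ _ (fun h' => hab (hinj h'))
  have hs := ho.inner_products_summable f
  simp only [hc] at hs
  have := tendsto_nhds_unique tendsto_const_nhds hs.tendsto_atTop_zero
  simpa using this

theorem eq_zero_of_coeff (f : Lp ℂ 2 μ) (hf : ∀ n k, inner ℂ (e N μ n k) f = 0) : f = 0 := by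
  have h1 : f ∈ (Submodule.span ℂ (Set.range fun p : ℤ × ℤ => e N μ p.1 p.2))ᗮ := by
    rw [Submodule.mem_orthogonal]
    intro u hu
    induction hu using Submodule.span_induction with
    | mem x hx => obtain ⟨p, rfl⟩ := hx; exact hf _ _
    | zero => simp
    | add x y _ _ hx hy => rw [inner_add_left, hx, hy, add_zero]
    | smul a x _ hx => rw [inner_smul_left, hx, mul_zero]
  rw [← Submodule.orthogonal_closure, e_span, Submodule.top_orthogonal_eq_bot] at h1
  simpa using h1

theorem const_of_inv (hN : 2 ≤ N) (h : ∀ g : Solenoid N, μ.map (fun z => g * z) = μ)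
    (f : Lp ℂ 2 μ)
    (hf : (fun z => (f : Solenoid N → ℂ) (shift N z)) =ᵐ[μ] f) :
    ∃ c : ℂ, f = c • e N μ 0 0 := by
  refine ⟨inner ℂ (e N μ 0 0) f, ?_⟩
  rw [← sub_eq_zero]
  apply eq_zero_of_coeff
  intro n k
  rw [inner_sub_right, inner_smul_right]
  by_cases hk : k = 0
  · subst hk
    rw [e_zero, inner_e_self]; ring
  · rw [coeff_zero N μ hN h f hf n k hk, ← e_zero N μ n, inner_e_ne N μ hN h n k 0 hk]; ring

theorem ergodic (hN : 2 ≤ N) (h : ∀ g : Solenoid N, μ.map (fun z => g * z) = μ) :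
    ShiftErgodic N μ := by
  intro E hE hS
  have hmem : MemLp (E.indicator fun _ => (1 : ℂ)) 2 μ := (memLp_const 1).indicator hE
  have h1 := hmem.coeFn_toLp
  have hq := (mp_shift N μ (invariant N μ h)).quasiMeasurePreserving
  obtain ⟨c, hc⟩ := const_of_inv N μ hN h (hmem.toLp _) (by
    filter_upwards [h1, hq.ae h1] with z hz hz'
    rw [hz, hz']
    have : shift N z ∈ E ↔ z ∈ E := by
      conv_rhs => rw [← hS]
      rfl
    by_cases hzE : z ∈ E
    · rw [Set.indicator_of_mem hzE, Set.indicator_of_mem (this.mpr hzE)]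
    · rw [Set.indicator_of_notMem hzE, Set.indicator_of_notMem (fun h' => hzE (this.mp h'))])
  have h2 : ∀ᵐ z ∂μ, E.indicator (fun _ => (1 : ℂ)) z = c := by
    have h3 := Lp.coeFn_smul c (e N μ 0 0)
    rw [← hc] at h3
    filter_upwards [h1, h3, e_coe N μ 0 0] with z hz hz' hz''
    rw [← hz, hz', Pi.smul_apply, hz'', chi_zero]
    simp
  by_cases hc1 : c = 1
  · right
    rw [← mem_ae_iff]
    filter_upwards [h2] with z hz
    by_contra hzE
    rw [Set.indicator_of_notMem hzE, hc1] at hz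
    exact zero_ne_one hz
  · left
    rw [measure_eq_zero_iff_ae_notMem]
    filter_upwards [h2] with z hz hzE
    rw [Set.indicator_of_mem hzE] at hz
    exact hc1 hz.symm

end L2

section Hilbert

variable {H : Type*} [NormedAddCommGroup H] [InnerProductSpace ℂ H] [CompleteSpace H]

theorem inv_apply_of_eq (g : unitary (H →L[ℂ] H)) {x y : H} (hxy : (g : H →L[ℂ] H) x = y) :
    ((g⁻¹ : unitary (H →L[ℂ] H)) : H →L[ℂ] H) y = x := by
  rw [← hxy, ← mul_apply_eq_comp, ← Submonoid.coe_mul, inv_mul_cancel]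
  rfl

theorem inner_unitary (g : unitary (H →L[ℂ] H)) (x y : H) :
    inner ℂ ((g : H →L[ℂ] H) x) y =
      inner ℂ x (((g⁻¹ : unitary (H →L[ℂ] H)) : H →L[ℂ] H) y) := by
  have : ((g⁻¹ : unitary (H →L[ℂ] H)) : H →L[ℂ] H) =
      ContinuousLinearMap.adjoint (g : H →L[ℂ] H) := rfl
  rw [this, ContinuousLinearMap.adjoint_inner_right]

theorem proj_comm (G : Subgroup (unitary (H →L[ℂ] H))) (K : Submodule ℂ H)
    [K.HasOrthogonalProjection]
    (hK : ∀ g ∈ G, ∀ v ∈ K, (g : H →L[ℂ] H) v ∈ K) (g : unitary (H →L[ℂ] H)) (hg : g ∈ G)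
    (v : H) : K.starProjection ((g : H →L[ℂ] H) v) = (g : H →L[ℂ] H) (K.starProjection v) := by
  refine Submodule.eq_starProjection_of_mem_of_inner_eq_zero
    (hK g hg _ (Submodule.starProjection_apply_mem K v)) fun w hw => ?_
  rw [← map_sub, inner_unitary]
  exact Submodule.starProjection_inner_eq_zero v _ (hK _ (G.inv_mem hg) w hw)

end Hilbert

theorem irreducible (N : ℕ) (hN : 2 ≤ N) (μ : Measure (Solenoid N)) [IsProbabilityMeasure μ]
    (h : ∀ g : Solenoid N, μ.map (fun z => g * z) = μ)
    (U T : unitary (Lp ℂ 2 μ →L[ℂ] Lp ℂ 2 μ)) (hUT : IsPiNuTheta N μ (fun _ => 1) U T)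
    (K : Submodule ℂ (Lp ℂ 2 μ)) (hKc : IsClosed (K : Set (Lp ℂ 2 μ)))
    (hK : ∀ g ∈ Subgroup.closure ({U, T} : Set (unitary (Lp ℂ 2 μ →L[ℂ] Lp ℂ 2 μ))),
          ∀ v ∈ K, (g : Lp ℂ 2 μ →L[ℂ] Lp ℂ 2 μ) v ∈ K) : K = ⊥ ∨ K = ⊤ := by
  obtain ⟨hU, hT⟩ := hUT
  have hinv := invariant N μ h
  have hq := (mp_shift N μ hinv).quasiMeasurePreserving
  -- `U` is composition with the shift
  have hU' : ∀ ξ : Lp ℂ 2 μ, (((U : Lp ℂ 2 μ →L[ℂ] Lp ℂ 2 μ) ξ : Lp ℂ 2 μ) : Solenoid N → ℂ)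
      =ᵐ[μ] fun z => (ξ : Solenoid N → ℂ) (shift N z) := by
    intro ξ
    have h0 := hU ξ
    rw [hinv] at h0
    filter_upwards [h0, Measure.rnDeriv_self μ] with z hz hz'
    rw [hz, hz']
    simp
  have hUe : ∀ n k, (U : Lp ℂ 2 μ →L[ℂ] Lp ℂ 2 μ) (e N μ n k) = e N μ (n - 1) k := by
    intro n k
    apply Lp.ext
    filter_upwards [hU' (e N μ n k), hq.ae (e_coe N μ n k), e_coe N μ (n - 1) k]
      with z h1 h2 h3
    rw [h1, h2, h3, chi_shift]
  have hTe : ∀ k, (T : Lp ℂ 2 μ →L[ℂ] Lp ℂ 2 μ) (e N μ 0 k) = e N μ 0 (k + 1) := by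
    intro k
    apply Lp.ext
    filter_upwards [hT (e N μ 0 k), e_coe N μ 0 k, e_coe N μ 0 (k + 1)] with z h1 h2 h3
    rw [h1, h2, h3, add_comm k 1, ← chi_mul, ContinuousMap.mul_apply, chi_apply N 0 1, zpow_one]
  set G := Subgroup.closure ({U, T} : Set (unitary (Lp ℂ 2 μ →L[ℂ] Lp ℂ 2 μ))) with hG
  have hUG : U ∈ G := Subgroup.subset_closure (by simp)
  have hTG : T ∈ G := Subgroup.subset_closure (by simp)
  have key1 : ∀ k, ∃ g ∈ G, (g : Lp ℂ 2 μ →L[ℂ] Lp ℂ 2 μ) (e N μ 0 0) = e N μ 0 k := by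
    intro k
    induction k using Int.induction_on with
    | zero => exact ⟨1, G.one_mem, rfl⟩
    | succ k ih =>
      obtain ⟨g, hg, hge⟩ := ih
      refine ⟨T * g, G.mul_mem hTG hg, ?_⟩
      rw [Submonoid.coe_mul, mul_apply_eq_comp, hge, hTe]
    | pred k ih =>
      obtain ⟨g, hg, hge⟩ := ih
      refine ⟨T⁻¹ * g, G.mul_mem (G.inv_mem hTG) hg, ?_⟩
      rw [Submonoid.coe_mul, mul_apply_eq_comp, hge]
      apply inv_apply_of_eq
      rw [hTe]; congr 1; ring
  have key : ∀ n k, ∃ g ∈ G, (g : Lp ℂ 2 μ →L[ℂ] Lp ℂ 2 μ) (e N μ 0 0) = e N μ n k := by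
    intro n k
    induction n using Int.induction_on with
    | zero => exact key1 k
    | succ n ih =>
      obtain ⟨g, hg, hge⟩ := ih
      refine ⟨U⁻¹ * g, G.mul_mem (G.inv_mem hUG) hg, ?_⟩
      rw [Submonoid.coe_mul, mul_apply_eq_comp, hge]
      apply inv_apply_of_eq
      rw [hUe]; congr 1; ring
    | pred n ih =>
      obtain ⟨g, hg, hge⟩ := ih
      refine ⟨U * g, G.mul_mem hUG hg, ?_⟩
      rw [Submonoid.coe_mul, mul_apply_eq_comp, hge, hUe]
  have : CompleteSpace K := hKc.completeSpace_coe
  have hcomm := proj_comm G K hK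
  -- the projection of `1` is shift-invariant, hence constant
  have hfix : (U : Lp ℂ 2 μ →L[ℂ] Lp ℂ 2 μ) (K.starProjection (e N μ 0 0)) =
      K.starProjection (e N μ 0 0) := by
    rw [← hcomm U hUG, hUe]
    simp only [e_zero]
  obtain ⟨c, hc⟩ := const_of_inv N μ hN h (K.starProjection (e N μ 0 0)) (by
    have := hU' (K.starProjection (e N μ 0 0))
    rw [hfix] at this
    exact this.symm)
  have hPe : ∀ n k, K.starProjection (e N μ n k) = c • e N μ n k := by
    intro n k
    obtain ⟨g, hg, hge⟩ := key n k
    rw [← hge, hcomm g hg, hc, map_smul]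
  have hP : ∀ v, K.starProjection v = c • v := by
    have hd : Dense ((Submodule.span ℂ (Set.range fun p : ℤ × ℤ => e N μ p.1 p.2) :
        Submodule ℂ (Lp ℂ 2 μ)) : Set (Lp ℂ 2 μ)) :=
      Submodule.dense_iff_topologicalClosure_eq_top.mpr (e_span N μ)
    have : K.starProjection = c • ContinuousLinearMap.id ℂ (Lp ℂ 2 μ) := by
      refine ContinuousLinearMap.ext_on hd ?_
      rintro - ⟨p, rfl⟩
      exact hPe _ _
    intro v
    rw [this]; rfl
  by_cases hc0 : c = 0
  · left
    rw [eq_bot_iff]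
    intro v hv
    have := Submodule.starProjection_eq_self_iff.mpr hv
    rw [hP, hc0, zero_smul] at this
    simp [← this]
  · right
    rw [eq_top_iff]
    intro v _
    have := Submodule.starProjection_apply_mem K v
    rw [hP] at this
    exact (Submodule.smul_mem_iff K hc0).mp this

end SolAux


end

open MeasureTheory Real Complex Filter Finset in
/-- Example 2.6. The Haar measure `μ_{S_N}` of the solenoid
(the translation-invariant probability measure) is invariant under the shift `S`,
the shift is ergodic with respect to it, and consequently the representation
`π_{μ_{S_N},1}` of `BS(1,N)` on `L²(μ_{S_N})` is irreducible. -/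
theorem statement_5 (N : ℕ) (hN : 2 ≤ N)
    (μS : Measure (Solenoid N)) [IsProbabilityMeasure μS]
    (hhaar : ∀ g : Solenoid N, μS.map (fun z => g * z) = μS) :
    -- invariance of Haar measure under the shift:  μ ∘ S = μ
    measShift N μS = μS ∧
    -- ergodicity of the shift with respect to Haar measure
    ShiftErgodic N μS ∧
    -- irreducibility of the representation `π_{μS, 1}`:
    -- every closed invariant subspace is trivial
    (∀ U T : unitary (Lp ℂ 2 μS →L[ℂ] Lp ℂ 2 μS),
      IsPiNuTheta N μS (fun _ => 1) U T →
      ∀ K : Submodule ℂ (Lp ℂ 2 μS), IsClosed (K : Set (Lp ℂ 2 μS)) →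
        (∀ g ∈ Subgroup.closure ({U, T} : Set (unitary (Lp ℂ 2 μS →L[ℂ] Lp ℂ 2 μS))),
          ∀ v ∈ K, (g : Lp ℂ 2 μS →L[ℂ] Lp ℂ 2 μS) v ∈ K) →
        K = ⊥ ∨ K = ⊤) := by
  exact ⟨SolAux.invariant N μS hhaar, SolAux.ergodic N μS hN hhaar,
    fun U T hUT K hKc hK => SolAux.irreducible N hN μS hhaar U T hUT K hKc hK⟩
end
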